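/- For every integer n ≥ 3, the quadruply-refined ASM generating function satisfies the quadratic relation: y(z4−z2)(z1−z3)·Zqua_n(x,y;z1,z2,z3,z4)·Z_{n−2}(x,y) = ((z1−1)(z2−1)−y·z1·z2)((z3−1)(z4−1)−y·z3·z4)·Zadj_{n−1}(x,y;z4,z1)·Zadj_{n−1}(x,y;z2,z3) − (x(z4−1)(z1−1)−y)(x(z2−1)(z3−1)−y)·z1·z2·z3·z4·Zbaradj_{n−1}(x,y;z1,z2)·Zbaradj_{n−1}(x,y;z3,z4) − (z2−1)(z3−1)((z4−1)(z1−1)−y·z4·z1)·Zadj_{n−1}(x,y;z4,z1)·Z_{n−2}(x,y) + (z3−1)(z4−1)(x(z1−1)(z2−1)−y)·z1·z2·(x·z3·z4)^{n−1}·Zbaradj_{n−1}(x,y;z1,z2)·Z_{n−2}(x,y) − (z4−1)(z1−1)((z2−1)(z3−1)−y·z2·z3)·Zadj_{n−1}(x,y;z2,z3)·Z_{n−2}(x,y) + (z1−1)(z2−1)(x(z3−1)(z4−1)−y)·z3·z4·(x·z1·z2)^{n−1}·Zbaradj_{n−1}(x,y;z3,z4)·Z_{n−2}(x,y) + (z1−1)(z2−1)(z3−1)(z4−1)(1−(x²·z1·z2·z3·z4)^{n−1})·Z_{n−2}(x,y)²,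 as an identity of polynomials in ℤ[x,y,z1,z2,z3,z4] (equivalently, for all values of the variables in any commutative ring). -/

import Mathlib

open Finset

/-- The `n × n` integer matrix encoded by `e`, with entries in `{-1, 0, 1}`. -/
def asmMat {n : ℕ} (e : Fin n → Fin n → Fin 3) : Fin n → Fin n → ℤ :=
  fun i j => (e i j : ℤ) - 1

/-- `A` is an alternating sign matrix: all entries lie in `{-1, 0, 1}`, every
partial row sum and every partial column sum is `0` or `1` (equivalently, the
nonzero entries of each row and of each column alternate in sign), and every
complete row sum and column sum is `1`. -/
def IsASM {n : ℕ} (A : Fin n → Fin n → ℤ) : Prop :=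
  (∀ i j, A i j = -1 ∨ A i j = 0 ∨ A i j = 1) ∧
  (∀ (i j : Fin n), (∑ j' ∈ univ.filter (fun j' : Fin n => j' ≤ j), A i j') = 0 ∨
    (∑ j' ∈ univ.filter (fun j' : Fin n => j' ≤ j), A i j') = 1) ∧
  (∀ (i j : Fin n), (∑ i' ∈ univ.filter (fun i' : Fin n => i' ≤ i), A i' j) = 0 ∨
    (∑ i' ∈ univ.filter (fun i' : Fin n => i' ≤ i), A i' j) = 1) ∧
  (∀ i : Fin n, (∑ j, A i j) = 1) ∧
  (∀ j : Fin n, (∑ i, A i j) = 1)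

/-- `ν(A)`, the number of generalized inversions of `A`. -/
def nuASM {n : ℕ} (A : Fin n → Fin n → ℤ) : ℕ :=
  (∑ i : Fin n, ∑ i' : Fin n, ∑ j : Fin n, ∑ j' : Fin n,
      if i < i' ∧ j' ≤ j then A i j * A i' j' else 0).toNat

/-- `μ(A)`, the number of entries of `A` equal to `-1`. -/
def muASM {n : ℕ} (A : Fin n → Fin n → ℤ) : ℕ :=
  (univ.filter (fun p : Fin n × Fin n => A p.1 p.2 = -1)).card

/-- `ρT(A)`, the number of `0`'s to the left of the `1` in the top row of `A`. -/
def rhoT {n : ℕ} (A : Fin n → Fin n → ℤ) : ℕ :=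
  (univ.filter (fun j : Fin n =>
    A ⟨0, j.pos⟩ j = 0 ∧ ∃ j' : Fin n, j < j' ∧ A ⟨0, j.pos⟩ j' = 1)).card

/-- `ρR(A)`, the number of `0`'s below the `1` in the right-most column of `A`. -/
def rhoR {n : ℕ} (A : Fin n → Fin n → ℤ) : ℕ :=
  (univ.filter (fun i : Fin n =>
    A i ⟨n - 1, Nat.sub_lt i.pos Nat.one_pos⟩ = 0 ∧
      ∃ i' : Fin n, i' < i ∧ A i' ⟨n - 1, Nat.sub_lt i.pos Nat.one_pos⟩ = 1)).card

/-- `ρB(A)`, the number of `0`'s to the right of the `1` in the bottom row of `A`. -/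
def rhoB {n : ℕ} (A : Fin n → Fin n → ℤ) : ℕ :=
  (univ.filter (fun j : Fin n =>
    A ⟨n - 1, Nat.sub_lt j.pos Nat.one_pos⟩ j = 0 ∧
      ∃ j' : Fin n, j' < j ∧ A ⟨n - 1, Nat.sub_lt j.pos Nat.one_pos⟩ j' = 1)).card

/-- `ρL(A)`, the number of `0`'s above the `1` in the left-most column of `A`. -/
def rhoL {n : ℕ} (A : Fin n → Fin n → ℤ) : ℕ :=
  (univ.filter (fun i : Fin n =>
    A i ⟨0, i.pos⟩ = 0 ∧ ∃ i' : Fin n, i < i' ∧ A i' ⟨0, i.pos⟩ = 1)).card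

open Classical in
/-- The quadruply-refined ASM generating function
`Zqua_n(x,y;z1,z2,z3,z4) = Σ_A x^{ν(A)} y^{μ(A)} z1^{ρT(A)} z2^{ρR(A)} z3^{ρB(A)} z4^{ρL(A)}`. -/
noncomputable def Zqua (n : ℕ) {R : Type*} [CommRing R] (x y z1 z2 z3 z4 : R) : R :=
  ∑ e : Fin n → Fin n → Fin 3,
    if IsASM (asmMat e) then
      x ^ nuASM (asmMat e) * y ^ muASM (asmMat e) * z1 ^ rhoT (asmMat e) *
        z2 ^ rhoR (asmMat e) * z3 ^ rhoB (asmMat e) * z4 ^ rhoL (asmMat e)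
    else 0

/-- Adjacent-boundary doubly-refined generating function `Zadj_n(x,y;z1,z2)`. -/
noncomputable def Zadj (n : ℕ) {R : Type*} [CommRing R] (x y z1 z2 : R) : R :=
  Zqua n x y z1 1 1 z2

/-- Alternative adjacent-boundary doubly-refined generating function `Zbaradj_n(x,y;z1,z2)`. -/
noncomputable def Zbaradj (n : ℕ) {R : Type*} [CommRing R] (x y z1 z2 : R) : R :=
  Zqua n x y z1 z2 1 1

/-- Triply-refined generating function `Ztri_n(x,y;z1,z2,z3)`. -/
noncomputable def Ztri (n : ℕ) {R : Type*} [CommRing R] (x y z1 z2 z3 : R) : R :=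
  Zqua n x y z1 1 z2 z3

/-- Opposite-boundary doubly-refined generating function `Zopp_n(x,y;z1,z2)`. -/
noncomputable def Zopp (n : ℕ) {R : Type*} [CommRing R] (x y z1 z2 : R) : R :=
  Zqua n x y z1 1 z2 1

/-- Singly-refined generating function `Z_n(x,y;z)`. -/
noncomputable def Zsing (n : ℕ) {R : Type*} [CommRing R] (x y z : R) : R :=
  Zqua n x y z 1 1 1

/-- Unrefined generating function `Z_n(x,y)`.  Note `Zun 0 x y = 1`. -/
noncomputable def Zun (n : ℕ) {R : Type*} [CommRing R] (x y : R) : R :=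
  Zqua n x y 1 1 1 1

/-!
The ASM generating function is a six-vertex partition function `sixVertexZ x y κ u v` at `κ = 0`,
with the four refinements carried by the spectral parameters of the extreme rows and columns.
When `κ * y = 1` the model satisfies an exchange relation for adjacent rows, so Lagrange
interpolation determines the partition function and the Izergin-Korepin determinant formula
follows; the Desnanot-Jacobi identity then gives a condensation formula for it.

A vertex weight whose row or column parameter is `1` does not depend on `κ`. If all parameters off
the boundary are `1`, then only the corner weights see `κ`, and each partition function in the
condensation formula is a polynomial in these whose coefficients are partition functions with
frozen corners, which are independent of `κ`. Condensation at `κ = y⁻¹` is thus a relation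
between frozen partition functions, and these express the generating functions at `κ = 0`.
The relation is polynomial, so the generic point suffices.
-/

section PartialSums

variable {n : ℕ}

theorem sum_filter_lt_zero (a : Fin (n + 1) → ℤ) : ∑ j' with j' < 0, a j' = 0 := by
  simp

theorem sum_filter_lt_succ (a : Fin (n + 1) → ℤ) (j : Fin n) :
    ∑ j' with j' < j.succ, a j' = a 0 + ∑ j' with j' < j, a j'.succ := by
  simp [sum_filter, Fin.sum_univ_succ]

theorem sum_filter_le_eq (a : Fin n → ℤ) (j : Fin n) :
    ∑ j' with j' ≤ j, a j' = (∑ j' with j' < j, a j') + a j := by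
  rw [filter_ge_eq_Iic, filter_gt_eq_Iio, ← Iio_insert, sum_insert notMem_Iio_self, add_comm]

theorem sum_filter_lt_add_sum_filter_gt (a : Fin n → ℤ) (j : Fin n) :
    (∑ j' with j' < j, a j') + a j + ∑ j' with j < j', a j' = ∑ j', a j' := by
  rw [← sum_filter_le_eq, ← sum_filter_add_sum_filter_not univ (· ≤ j)]
  simp only [not_le]

theorem sum_filter_lt_comp_rev (a : Fin n → ℤ) (j : Fin n) :
    ∑ j' with j' < j, a j'.rev = ∑ j' with j.rev < j', a j' := by
  rw [sum_filter, sum_filter, ← Equiv.sum_comp Fin.revPerm]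
  simp [Fin.rev_lt_iff]

theorem sum_filter_lt_last_add (a : Fin (n + 1) → ℤ) :
    ∑ j' with j' < Fin.last n, a j' + a (Fin.last n) = ∑ j, a j := by
  rw [← sum_filter_le_eq]
  simp [Fin.le_last]

end PartialSums

namespace IsASM

variable {n : ℕ} {A : Fin n → Fin n → ℤ}

theorem row_sum (hA : IsASM A) (i : Fin n) : ∑ j, A i j = 1 := hA.2.2.2.1 i

theorem transpose (hA : IsASM A) : IsASM fun i j => A j i :=
  ⟨fun i j => hA.1 j i, fun i j => hA.2.2.1 j i, fun i j => hA.2.1 j i, hA.2.2.2.2, hA.2.2.2.1⟩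

theorem col_sum (hA : IsASM A) (j : Fin n) : ∑ i, A i j = 1 := hA.transpose.row_sum j

theorem row_sum_lt_add (hA : IsASM A) (i j : Fin n) :
    ∑ j' with j' < j, A i j' + A i j = 0 ∨ ∑ j' with j' < j, A i j' + A i j = 1 := by
  simpa only [sum_filter_le_eq] using hA.2.1 i j

theorem row_sum_lt (hA : IsASM A) (i j : Fin n) :
    ∑ j' with j' < j, A i j' = 0 ∨ ∑ j' with j' < j, A i j' = 1 := by
  obtain _ | n := n
  · exact j.elim0
  induction j using Fin.cases with
  | zero => simp
  | succ j =>
    simpa only [Fin.lt_def, Fin.le_def, Fin.val_succ, Nat.lt_succ_iff, Fin.val_castSucc] using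
      hA.2.1 i j.castSucc

theorem reflect (hA : IsASM A) : IsASM fun i j => A i j.rev := by
  refine ⟨fun i j => hA.1 i _, fun i j => ?_, fun i j => hA.2.2.1 i _, fun i => ?_,
    fun j => hA.2.2.2.2 _⟩
  · have h := sum_filter_lt_add_sum_filter_gt (A i) j.rev
    rw [hA.row_sum] at h
    rw [sum_filter_le_eq fun j => A i j.rev, sum_filter_lt_comp_rev]
    have := hA.row_sum_lt i j.rev
    omega
  · exact (Equiv.sum_comp Fin.revPerm (A i)).trans (hA.row_sum i)

end IsASM

/-- The six Boltzmann weights of a site in the six-vertex model with domain-wall boundary: a zero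
entry with partial row sum `h` to its left and partial column sum `k` above it has weight `whk`;
the entries `1` and `-1` have weights `cp` and `cm`. -/
structure VertexWeights (R : Type*) where
  w00 : R
  w11 : R
  w01 : R
  w10 : R
  cp : R
  cm : R

namespace VertexWeights

variable {R S : Type*}

/-- The weight of the entry `a` with partial row sum `h` to its left and partial column sum `k`
above it; it vanishes on the configurations that cannot occur in an alternating sign matrix. -/
def ev [Zero R] (c : VertexWeights R) (h k a : ℤ) : R :=
  if a = 0 then
    if h = 0 then if k = 0 then c.w00 else if k = 1 then c.w01 else 0
    else if h = 1 then if k = 0 then c.w10 else if k = 1 then c.w11 else 0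
    else 0
  else if a = 1 then if h = 0 ∧ k = 0 then c.cp else 0
  else if a = -1 then if h = 1 ∧ k = 1 then c.cm else 0
  else 0

/-- The image of the local weights under a map. -/
def map (f : R → S) (c : VertexWeights R) : VertexWeights S :=
  ⟨f c.w00, f c.w11, f c.w01, f c.w10, f c.cp, f c.cm⟩

/-- The weights of the site reflected in the main diagonal. -/
def swap (c : VertexWeights R) : VertexWeights R :=
  ⟨c.w00, c.w11, c.w10, c.w01, c.cp, c.cm⟩

/-- The weights of the site reflected in a vertical line. -/
def reflect (c : VertexWeights R) : VertexWeights R :=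
  ⟨c.w10, c.w01, c.w11, c.w00, c.cp, c.cm⟩

theorem ev_map [Semiring R] [Semiring S] (f : R →+* S) (c : VertexWeights R) (h k a : ℤ) :
    (c.map f).ev h k a = f (c.ev h k a) := by
  simp only [ev, map, apply_ite f, map_zero]

variable [Zero R]

theorem ev_swap (c : VertexWeights R) (h k a : ℤ) : c.swap.ev h k a = c.ev k h a := by
  simp only [ev, swap]
  split_ifs <;> first | rfl | omega

theorem ev_reflect (c : VertexWeights R) (h k a : ℤ) :
    c.reflect.ev (1 - h - a) k a = c.ev h k a := by
  simp only [ev, reflect]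
  split_ifs <;> first | rfl | omega

theorem eq_zero_or_one_of_ev_ne_zero {c : VertexWeights R} {h k a : ℤ} (hc : c.ev h k a ≠ 0) :
    (h + a = 0 ∨ h + a = 1) ∧ (k + a = 0 ∨ k + a = 1) := by
  unfold ev at hc
  split_ifs at hc <;> first | exact absurd rfl hc | (subst_vars; omega)

end VertexWeights

section PartitionFunction

variable {R S : Type*} [CommRing R] [CommRing S] {n : ℕ}

open Classical in
/-- The partition function of the alternating sign matrices of size `n` with local weights `f`. -/
noncomputable def asmZ (f : Fin n → Fin n → VertexWeights R) : R :=
  ∑ e : Fin n → Fin n → Fin 3, if IsASM (asmMat e) then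
    ∏ i, ∏ j, (f i j).ev (∑ j' with j' < j, asmMat e i j') (∑ i' with i' < i, asmMat e i' j)
      (asmMat e i j) else 0

theorem map_asmZ (φ : R →+* S) (f : Fin n → Fin n → VertexWeights R) :
    φ (asmZ f) = asmZ fun i j => (f i j).map φ := by
  simp only [asmZ, map_sum, apply_ite φ, map_prod, map_zero, VertexWeights.ev_map]

theorem asmZ_swap (f : Fin n → Fin n → VertexWeights R) :
    asmZ (fun i j => (f j i).swap) = asmZ f := by
  classical
  rw [asmZ, ← (Equiv.piComm fun _ _ : Fin n => Fin 3).sum_comp]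
  refine sum_congr rfl fun e _ => if_congr ⟨IsASM.transpose, IsASM.transpose⟩ ?_ rfl
  rw [prod_comm]
  simp only [VertexWeights.ev_swap]
  rfl

theorem prod_ev_reflect (f : Fin n → Fin n → VertexWeights R) {A : Fin n → Fin n → ℤ}
    (hA : IsASM A) :
    ∏ i, ∏ j : Fin n, (f i j.rev).reflect.ev (∑ j' with j' < j, A i j'.rev)
        (∑ i' with i' < i, A i' j.rev) (A i j.rev) =
      ∏ i, ∏ j, (f i j).ev (∑ j' with j' < j, A i j') (∑ i' with i' < i, A i' j) (A i j) := by
  refine prod_congr rfl fun i _ => ?_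
  rw [← Equiv.prod_comp Fin.revPerm]
  refine prod_congr rfl fun j _ => ?_
  have hgt : ∑ j' with j < j', A i j' = 1 - ∑ j' with j' < j, A i j' - A i j := by
    rw [← hA.row_sum i, ← sum_filter_lt_add_sum_filter_gt (A i) j]
    ring
  rw [Fin.revPerm_apply, Fin.rev_rev, sum_filter_lt_comp_rev, Fin.rev_rev, hgt,
    VertexWeights.ev_reflect]

theorem asmZ_reflect (f : Fin n → Fin n → VertexWeights R) :
    asmZ (fun i j => (f i j.rev).reflect) = asmZ f := by
  classical
  let σ : (Fin n → Fin n → Fin 3) ≃ (Fin n → Fin n → Fin 3) :=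
    Equiv.piCongrRight fun _ => Fin.revPerm.arrowCongr (Equiv.refl _)
  rw [asmZ, ← σ.sum_comp]
  refine sum_congr rfl fun e _ => ?_
  have hσ : asmMat (σ e) = fun i j => asmMat e i j.rev := rfl
  rw [hσ]
  exact if_ctx_congr ⟨fun h => by simpa only [Fin.rev_rev] using h.reflect, IsASM.reflect⟩
    (fun h => prod_ev_reflect f h) fun _ => rfl

end PartitionFunction

section Transfer

variable {R : Type*} [CommRing R]

/-- The row transfer operator: it sends a function `ψ` of the column sums below a row to a
function of the column sums above it, starting from the partial row sum `h` and ending with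
the row sum `1`. -/
def rowTransfer : List (VertexWeights R) → ℤ → List ℤ → (List ℤ → R) → R
  | [], h, [], ψ => if h = 1 then ψ [] else 0
  | c :: F, h, k :: ks, ψ => ∑ r : Fin 3,
      c.ev h k ((r : ℤ) - 1) *
        rowTransfer F (h + ((r : ℤ) - 1)) ks (fun t => ψ ((k + ((r : ℤ) - 1)) :: t))
  | [], _, _ :: _, _ => 0
  | _ :: _, _, [], _ => 0

/-- The partition function of a stack of rows, as a function of the column sums above it. -/
def stackZ : List (List (VertexWeights R)) → List ℤ → R
  | [], k => if ∀ t ∈ k, t = 1 then 1 else 0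
  | F :: L, k => rowTransfer F 0 k (stackZ L)

theorem rowTransfer_zero_zero (c : VertexWeights R) (F ks) (ψ : List ℤ → R) :
    rowTransfer (c :: F) 0 (0 :: ks) ψ =
      c.w00 * rowTransfer F 0 ks (fun t => ψ (0 :: t)) +
      c.cp * rowTransfer F 1 ks (fun t => ψ (1 :: t)) := by
  simp [rowTransfer, VertexWeights.ev, Fin.sum_univ_three]

theorem rowTransfer_one_one (c : VertexWeights R) (F ks) (ψ : List ℤ → R) :
    rowTransfer (c :: F) 1 (1 :: ks) ψ =
      c.w11 * rowTransfer F 1 ks (fun t => ψ (1 :: t)) +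
      c.cm * rowTransfer F 0 ks (fun t => ψ (0 :: t)) := by
  simp [rowTransfer, VertexWeights.ev, Fin.sum_univ_three, add_comm]

theorem rowTransfer_zero_one (c : VertexWeights R) (F ks) (ψ : List ℤ → R) :
    rowTransfer (c :: F) 0 (1 :: ks) ψ = c.w01 * rowTransfer F 0 ks (fun t => ψ (1 :: t)) := by
  simp [rowTransfer, VertexWeights.ev, Fin.sum_univ_three]

theorem rowTransfer_one_zero (c : VertexWeights R) (F ks) (ψ : List ℤ → R) :
    rowTransfer (c :: F) 1 (0 :: ks) ψ = c.w10 * rowTransfer F 1 ks (fun t => ψ (0 :: t)) := by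
  simp [rowTransfer, VertexWeights.ev, Fin.sum_univ_three]

theorem rowTransfer_of_ne (c : VertexWeights R) (F) {h k : ℤ} (ks) (ψ : List ℤ → R)
    (h0 : k ≠ 0) (h1 : k ≠ 1) : rowTransfer (c :: F) h (k :: ks) ψ = 0 := by
  simp [rowTransfer, VertexWeights.ev, h0, h1]

theorem rowTransfer_add (F : List (VertexWeights R)) (h : ℤ) (ks) (ψ φ : List ℤ → R) :
    rowTransfer F h ks (fun t => ψ t + φ t) = rowTransfer F h ks ψ + rowTransfer F h ks φ := by
  induction F generalizing h ks ψ φ with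
  | nil => cases ks <;> simp [rowTransfer, ite_add_ite]
  | cons c F ih =>
    cases ks with
    | nil => simp [rowTransfer]
    | cons k ks => simp only [rowTransfer, ih, mul_add, sum_add_distrib]

theorem rowTransfer_mul (F : List (VertexWeights R)) (h : ℤ) (ks) (r : R) (ψ : List ℤ → R) :
    rowTransfer F h ks (fun t => r * ψ t) = r * rowTransfer F h ks ψ := by
  induction F generalizing h ks ψ with
  | nil => cases ks <;> simp [rowTransfer]
  | cons c F ih =>
    cases ks with
    | nil => simp [rowTransfer]
    | cons k ks => simp only [rowTransfer, ih, mul_left_comm, mul_sum]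

theorem rowTransfer_one_replicate (F : List (VertexWeights R)) (ψ : List ℤ → R) :
    rowTransfer F 1 (List.replicate F.length 0) ψ =
      (F.map fun c => c.w10).prod * ψ (List.replicate F.length 0) := by
  induction F generalizing ψ with
  | nil => simp [rowTransfer]
  | cons c F ih =>
    simp only [List.length_cons, List.replicate_succ, rowTransfer_one_zero, ih, List.map_cons,
      List.prod_cons, mul_assoc]

theorem stackZ_one_cons (L : List (VertexWeights R × List (VertexWeights R))) (ks : List ℤ) :
    stackZ (L.map fun p => p.1 :: p.2) (1 :: ks) =
      (L.map fun p => p.1.w01).prod * stackZ (L.map fun p => p.2) ks := by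
  induction L generalizing ks with
  | nil => simp [stackZ]
  | cons p L ih =>
    simp only [List.map_cons, stackZ, rowTransfer_zero_one, List.prod_cons, ih, rowTransfer_mul,
      mul_assoc]

theorem stackZ_topLeft (c : VertexWeights R) (F : List (VertexWeights R))
    (L : List (VertexWeights R × List (VertexWeights R))) :
    stackZ ((c :: F) :: L.map fun p => p.1 :: p.2) (List.replicate (F.length + 1) 0) =
      c.w00 * rowTransfer F 0 (List.replicate F.length 0)
        (fun t => stackZ (L.map fun p => p.1 :: p.2) (0 :: t)) +
      c.cp * ((F.map fun c => c.w10).prod * ((L.map fun p => p.1.w01).prod *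
        stackZ (L.map fun p => p.2) (List.replicate F.length 0))) := by
  simp only [stackZ, List.replicate_succ, rowTransfer_zero_zero, stackZ_one_cons,
    rowTransfer_mul, rowTransfer_one_replicate]
  ring

variable {m n : ℕ}

theorem rowTransfer_ofFn (c : Fin n → VertexWeights R) (h : ℤ) (k : Fin n → ℤ)
    (ψ : List ℤ → R) :
    rowTransfer (List.ofFn c) h (List.ofFn k) ψ = ∑ r : Fin n → Fin 3,
      if h + ∑ j, ((r j : ℤ) - 1) = 1 then
        (∏ j, (c j).ev (h + ∑ j' with j' < j, ((r j' : ℤ) - 1)) (k j) ((r j : ℤ) - 1)) *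
          ψ (List.ofFn fun j => k j + ((r j : ℤ) - 1)) else 0 := by
  induction n generalizing h ψ with
  | zero => simp [rowTransfer]
  | succ n ih =>
    rw [List.ofFn_succ, List.ofFn_succ, rowTransfer, ← (Fin.consEquiv fun _ => Fin 3).sum_comp,
      Fintype.sum_prod_type]
    simp only [ih, mul_sum, Fin.consEquiv, Equiv.coe_fn_mk, Fin.sum_univ_succ,
      Fin.prod_univ_succ, Fin.cons_zero, Fin.cons_succ, List.ofFn_succ, mul_ite, mul_zero,
      ← add_assoc, sum_filter_lt_zero, sum_filter_lt_succ, mul_assoc, add_zero]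

theorem stackZ_ofFn (f : Fin m → Fin n → VertexWeights R) (k : Fin n → ℤ) :
    stackZ (List.ofFn fun i => List.ofFn (f i)) (List.ofFn k) = ∑ e : Fin m → Fin n → Fin 3,
      if (∀ i, ∑ j, ((e i j : ℤ) - 1) = 1) ∧ (∀ j, k j + ∑ i, ((e i j : ℤ) - 1) = 1) then
        ∏ i, ∏ j, (f i j).ev (∑ j' with j' < j, ((e i j' : ℤ) - 1))
          (k j + ∑ i' with i' < i, ((e i' j : ℤ) - 1)) ((e i j : ℤ) - 1) else 0 := by
  induction m generalizing k with
  | zero => simp [stackZ]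
  | succ m ih =>
    rw [List.ofFn_succ, stackZ, rowTransfer_ofFn,
      ← (Fin.consEquiv fun _ => Fin n → Fin 3).sum_comp, Fintype.sum_prod_type]
    simp only [ih, Fin.consEquiv, Equiv.coe_fn_mk, Fin.sum_univ_succ, Fin.prod_univ_succ,
      Fin.cons_zero, Fin.cons_succ, sum_filter_lt_zero, sum_filter_lt_succ, Fin.forall_fin_succ,
      add_zero, zero_add, ← add_assoc, mul_sum, mul_ite, mul_zero]
    refine sum_congr rfl fun r _ => ?_
    by_cases hr : ∑ j, ((r j : ℤ) - 1) = 1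
    · simp only [hr, true_and, if_true]
    · simp only [hr, false_and, if_false, sum_const_zero]

theorem isASM_of_prod_ev_ne_zero {f : Fin n → Fin n → VertexWeights R}
    {e : Fin n → Fin n → Fin 3} (hrow : ∀ i, ∑ j, asmMat e i j = 1)
    (hcol : ∀ j, ∑ i, asmMat e i j = 1)
    (hev : ∏ i, ∏ j, (f i j).ev (∑ j' with j' < j, asmMat e i j')
      (∑ i' with i' < i, asmMat e i' j) (asmMat e i j) ≠ 0) : IsASM (asmMat e) := by
  have hpartial := fun i j => VertexWeights.eq_zero_or_one_of_ev_ne_zero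
    fun h0 => hev (prod_eq_zero (mem_univ i) (prod_eq_zero (mem_univ j) h0))
  refine ⟨fun i j => ?_, fun i j => ?_, fun i j => ?_, hrow, hcol⟩
  · have := (e i j).is_lt
    simp only [asmMat]
    omega
  · rw [sum_filter_le_eq]
    exact (hpartial i j).1
  · rw [sum_filter_le_eq fun i' => asmMat e i' j]
    exact (hpartial i j).2

theorem asmZ_eq_stackZ (f : Fin n → Fin n → VertexWeights R) :
    asmZ f = stackZ (List.ofFn fun i => List.ofFn (f i)) (List.replicate n 0) := by
  classical
  rw [← List.ofFn_const, stackZ_ofFn, asmZ]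
  refine sum_congr rfl fun e _ => ?_
  simp only [zero_add]
  by_cases he : IsASM (asmMat e)
  · rw [if_pos he, if_pos ⟨he.row_sum, he.col_sum⟩]
    rfl
  · rw [if_neg he, eq_comm, ite_eq_right_iff]
    rintro ⟨hrow, hcol⟩
    by_contra hev
    exact he (isASM_of_prod_ev_ne_zero hrow hcol hev)

end Transfer

section SixVertex

variable {R : Type*} [CommRing R]

/-- The refined six-vertex weights with row parameter `u` and column parameter `v`. At `κ = 0` they
refine the statistics on the boundary; if `κ * y = 1` they satisfy the row-exchange relations. -/
def sixVertex (x y κ u v : R) : VertexWeights R where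
  w00 := u * v - κ * (u - 1) * (v - 1)
  w11 := x * (u * v - κ * (u - 1) * (v - 1))
  w01 := 1 - x * κ * (u - 1) * (v - 1)
  w10 := 1 - x * κ * (u - 1) * (v - 1)
  cp := 1
  cm := κ * ((1 - u) * (1 - x * u)) * ((1 - v) * (1 - x * v)) + (1 - u) * (1 - x * u) * v +
    u * ((1 - v) * (1 - x * v)) + y * u * v

/-- The factor that has to be cancelled in order to exchange the row parameters `u` and `u'`. -/
def exchangeFactor (x κ u u' : R) : R :=
  u + κ * (1 + x * u * u' - (x + 1) * u)

theorem sixVertex_cm {x y κ : R} (hκ : κ * y = 1) (u v : R) :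
    (sixVertex x y κ u v).cm = y * exchangeFactor x κ u u * exchangeFactor x κ v v := by
  simp only [sixVertex, exchangeFactor]
  linear_combination -(κ * (1 - u) * (1 - x * u) * (1 - v) * (1 - x * v) +
    (1 - u) * (1 - x * u) * v + u * (1 - v) * (1 - x * v)) * hκ

/-- The transfer through a row with parameter `a` above a row with parameter `b`, starting from
the partial row sums `h` and `l`. -/
def doubleRow (x y κ a b : R) (vs : List R) (h l : ℤ) (ks : List ℤ) (ψ : List ℤ → R) : R :=
  rowTransfer (vs.map (sixVertex x y κ a)) h ks
    fun t => rowTransfer (vs.map (sixVertex x y κ b)) l t ψ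

/-- The row-exchange relations between two rows with parameters `u` and `u'`. -/
structure RowExchange (x y κ u u' : R) (vs : List R) (ks : List ℤ) (ψ : List ℤ → R) : Prop where
  zero_zero : exchangeFactor x κ u u' * doubleRow x y κ u u' vs 0 0 ks ψ =
    exchangeFactor x κ u u' * doubleRow x y κ u' u vs 0 0 ks ψ
  one_one : exchangeFactor x κ u u' * doubleRow x y κ u u' vs 1 1 ks ψ =
    exchangeFactor x κ u u' * doubleRow x y κ u' u vs 1 1 ks ψ
  zero_one : exchangeFactor x κ u u' * doubleRow x y κ u u' vs 0 1 ks ψ =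
    exchangeFactor x κ u' u' * doubleRow x y κ u' u vs 0 1 ks ψ +
      κ * x * (u' - u) * doubleRow x y κ u' u vs 1 0 ks ψ
  one_zero : exchangeFactor x κ u u' * doubleRow x y κ u u' vs 1 0 ks ψ =
    κ * (u' - u) * doubleRow x y κ u' u vs 0 1 ks ψ +
      exchangeFactor x κ u u * doubleRow x y κ u' u vs 1 0 ks ψ

variable {x y κ : R}

theorem RowExchange.cons_zero (hκ : κ * y = 1) {u u' v : R} {vs : List R} {ks : List ℤ}
    {ψ : List ℤ → R} (h₀ : RowExchange x y κ u u' vs ks fun t => ψ (0 :: t))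
    (h₁ : RowExchange x y κ u u' vs ks fun t => ψ (1 :: t)) :
    RowExchange x y κ u u' (v :: vs) (0 :: ks) ψ := by
  obtain ⟨a₀₀, a₁₁, a₀₁, a₁₀⟩ := h₀
  obtain ⟨-, b₁₁, b₀₁, b₁₀⟩ := h₁
  let w := sixVertex x y κ
  let D := doubleRow x y κ u' u vs
  constructor <;>
    simp only [doubleRow, List.map_cons, rowTransfer_zero_zero, rowTransfer_one_one,
      rowTransfer_zero_one, rowTransfer_one_zero, rowTransfer_add, rowTransfer_mul,
      sixVertex_cm hκ] at * <;>
    simp only [sixVertex, exchangeFactor] at *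
  · linear_combination (norm := (simp only [w, sixVertex]; ring))
      (w u v).w00 * (w u' v).w00 * a₀₀ + (w u v).w00 * b₀₁ + (w u' v).w01 * b₁₀
  · linear_combination (norm := (simp only [w, sixVertex]; ring))
      (w u v).w10 * (w u' v).w10 * a₁₁
  · linear_combination (norm := (simp only [w, D, doubleRow, sixVertex, exchangeFactor]; ring))
      (w u v).w00 * (w u' v).w10 * a₀₁ + (w u' v).w11 * b₁₁ +
        y * exchangeFactor x κ u' u' * exchangeFactor x κ v v * a₁₀ +
        (u' - u) * exchangeFactor x κ u' u' * exchangeFactor x κ v v *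
          D 0 1 ks (fun t => ψ (0 :: t)) * hκ
  · linear_combination (norm := (simp only [w, D, doubleRow, sixVertex, exchangeFactor]; ring))
      (w u v).w10 * (w u' v).w00 * a₁₀ + (w u v).w10 * b₁₁ -
        (u' - u) * exchangeFactor x κ u u * exchangeFactor x κ v v *
          D 1 0 ks (fun t => ψ (0 :: t)) * hκ

theorem RowExchange.cons_one (hκ : κ * y = 1) {u u' v : R} {vs : List R} {ks : List ℤ}
    {ψ : List ℤ → R} (h₀ : RowExchange x y κ u u' vs ks fun t => ψ (0 :: t))
    (h₁ : RowExchange x y κ u u' vs ks fun t => ψ (1 :: t)) :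
    RowExchange x y κ u u' (v :: vs) (1 :: ks) ψ := by
  obtain ⟨a₀₀, -, a₀₁, a₁₀⟩ := h₀
  obtain ⟨b₀₀, b₁₁, b₀₁, b₁₀⟩ := h₁
  let w := sixVertex x y κ
  let D := doubleRow x y κ u' u vs
  constructor <;>
    simp only [doubleRow, List.map_cons, rowTransfer_zero_zero, rowTransfer_one_one,
      rowTransfer_zero_one, rowTransfer_one_zero, rowTransfer_add, rowTransfer_mul,
      sixVertex_cm hκ] at * <;>
    simp only [sixVertex, exchangeFactor] at *
  · linear_combination (norm := (simp only [w, sixVertex]; ring))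
      (w u v).w01 * (w u' v).w01 * b₀₀
  · linear_combination (norm := (simp only [w, sixVertex, exchangeFactor]; ring))
      (w u v).w11 * (w u' v).w11 * b₁₁ +
        (w u v).w11 * (y * exchangeFactor x κ u' u' * exchangeFactor x κ v v) * a₁₀ +
        (w u' v).w10 * (y * exchangeFactor x κ u u * exchangeFactor x κ v v) * a₀₁
  · linear_combination (norm := (simp only [w, D, doubleRow, sixVertex, exchangeFactor]; ring))
      (w u v).w01 * (w u' v).w11 * b₀₁ +
        (w u v).w01 * (y * exchangeFactor x κ u' u' * exchangeFactor x κ v v) * a₀₀ -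
        x * (u' - u) * exchangeFactor x κ u' u' * exchangeFactor x κ v v *
          D 0 1 ks (fun t => ψ (1 :: t)) * hκ
  · linear_combination (norm := (simp only [w, D, doubleRow, sixVertex, exchangeFactor]; ring))
      (w u v).w11 * (w u' v).w01 * b₁₀ +
        y * exchangeFactor x κ u u * exchangeFactor x κ v v * ((w u' v).w00 * a₀₀ + b₀₁) +
        x * (u' - u) * exchangeFactor x κ u u * exchangeFactor x κ v v *
          D 1 0 ks (fun t => ψ (1 :: t)) * hκ

theorem rowExchange (hκ : κ * y = 1) (u u' : R) (vs : List R) (ks : List ℤ) (ψ : List ℤ → R) :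
    RowExchange x y κ u u' vs ks ψ := by
  induction vs generalizing ks ψ with
  | nil => cases ks <;> constructor <;> simp [doubleRow, rowTransfer]
  | cons v vs ih =>
    obtain _ | ⟨k, ks⟩ := ks
    · constructor <;> simp [doubleRow, rowTransfer]
    by_cases h0 : k = 0
    · subst h0
      exact RowExchange.cons_zero hκ (ih _ _) (ih _ _)
    by_cases h1 : k = 1
    · subst h1
      exact RowExchange.cons_one hκ (ih _ _) (ih _ _)
    · constructor <;> simp [doubleRow, rowTransfer_of_ne _ _ _ _ h0 h1]

theorem stackZ_perm [IsDomain R] (hκ : κ * y = 1) (vs : List R) {us us' : List R}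
    (hp : us.Perm us') (hη : ∀ u ∈ us, ∀ u' ∈ us, exchangeFactor x κ u u' ≠ 0) (ks : List ℤ) :
    stackZ (us.map fun u => vs.map (sixVertex x y κ u)) ks =
      stackZ (us'.map fun u => vs.map (sixVertex x y κ u)) ks := by
  induction hp generalizing ks with
  | nil => rfl
  | cons a _ ih =>
    simp only [List.map_cons, stackZ]
    congr 1
    funext t
    exact ih (fun u hu u' hu' => hη u (by simp [hu]) u' (by simp [hu'])) t
  | swap a b l =>
    refine mul_left_cancel₀ (hη b (by simp) a (by simp)) ?_
    exact (rowExchange hκ b a vs ks (stackZ (l.map fun u => vs.map (sixVertex x y κ u)))).zero_zero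
  | trans hp _ ih ih' =>
    rw [ih hη, ih' fun u hu u' hu' => hη u (hp.mem_iff.2 hu) u' (hp.mem_iff.2 hu')]

end SixVertex

section CornerExpansion

variable {R : Type*} [CommRing R] {n : ℕ}

/-- The weights of a site that can only be occupied by a zero entry, with weight `1`. -/
def VertexWeights.frozen : VertexWeights R := ⟨1, 1, 1, 1, 0, 0⟩

/-- The local weights `f` with the site `p` frozen. -/
def freeze (f : Fin n → Fin n → VertexWeights R) (p : Fin n × Fin n) :
    Fin n → Fin n → VertexWeights R :=
  fun i j => if (i, j) = p then VertexWeights.frozen else f i j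

theorem asmZ_topLeft (f : Fin (n + 1) → Fin (n + 1) → VertexWeights R) :
    asmZ f = (f 0 0).w00 * asmZ (freeze f (0, 0)) + (f 0 0).cp * ((∏ j : Fin n, (f 0 j.succ).w10) *
      ((∏ i : Fin n, (f i.succ 0).w01) * asmZ fun i j : Fin n => f i.succ j.succ)) := by
  have expand (g : Fin (n + 1) → Fin (n + 1) → VertexWeights R) : asmZ g =
      (g 0 0).w00 * rowTransfer (List.ofFn fun j : Fin n => g 0 j.succ) 0 (List.replicate n 0)
        (fun t => stackZ (List.ofFn fun i : Fin n => List.ofFn (g i.succ)) (0 :: t)) +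
      (g 0 0).cp * ((∏ j : Fin n, (g 0 j.succ).w10) *
        ((∏ i : Fin n, (g i.succ 0).w01) * asmZ fun i j : Fin n => g i.succ j.succ)) := by
    have h := stackZ_topLeft (g 0 0) (List.ofFn fun j => g 0 j.succ)
      (List.ofFn fun i => (g i.succ 0, List.ofFn fun j => g i.succ j.succ))
    rw [asmZ_eq_stackZ, asmZ_eq_stackZ]
    simpa only [List.map_ofFn, Function.comp_def, List.length_ofFn, List.prod_ofFn, List.ofFn_succ]
      using h
  have row_succ (i : Fin n) : freeze f (0, 0) i.succ = f i.succ := by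
    funext j
    simp [freeze]
  rw [expand f, expand (freeze f (0, 0))]
  simp only [row_succ]
  simp only [freeze, VertexWeights.frozen, Prod.mk.injEq, Fin.succ_ne_zero, and_false, if_true,
    if_false, one_mul, zero_mul, add_zero]

end CornerExpansion

section SixVertexPartitionFunction

variable {R S : Type*} [CommRing R] [CommRing S] {n : ℕ}

/-- The partition function of the six-vertex model with row parameters `u` and column
parameters `v`. -/
noncomputable def sixVertexZ (x y κ : R) (u v : Fin n → R) : R :=
  asmZ fun i j => sixVertex x y κ (u i) (v j)

theorem map_sixVertex (φ : R →+* S) (x y κ u v : R) :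
    (sixVertex x y κ u v).map φ = sixVertex (φ x) (φ y) (φ κ) (φ u) (φ v) := by
  simp only [VertexWeights.map, sixVertex, map_add, map_sub, map_mul, map_one]

theorem map_sixVertexZ (φ : R →+* S) (x y κ : R) (u v : Fin n → R) :
    φ (sixVertexZ x y κ u v) = sixVertexZ (φ x) (φ y) (φ κ) (φ ∘ u) (φ ∘ v) := by
  simp only [sixVertexZ, map_asmZ, map_sixVertex, Function.comp_apply]

theorem sixVertexZ_eq_stackZ (x y κ : R) (u v : Fin n → R) :
    sixVertexZ x y κ u v = stackZ
      ((List.ofFn u).map fun a => (List.ofFn v).map (sixVertex x y κ a)) (List.replicate n 0) := by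
  simp only [sixVertexZ, asmZ_eq_stackZ, List.map_ofFn, Function.comp_def]

theorem sixVertexZ_comp_perm [IsDomain R] {x y κ : R} (hκ : κ * y = 1) {u : Fin n → R}
    (hη : ∀ i i', exchangeFactor x κ (u i) (u i') ≠ 0) (v : Fin n → R) (σ : Equiv.Perm (Fin n)) :
    sixVertexZ x y κ (u ∘ σ) v = sixVertexZ x y κ u v := by
  rw [sixVertexZ_eq_stackZ, sixVertexZ_eq_stackZ]
  refine stackZ_perm hκ _ (Equiv.Perm.ofFn_comp_perm σ u) ?_ _
  simp only [List.forall_mem_ofFn_iff, Function.comp_apply]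
  exact fun i i' => hη (σ i) (σ i')

theorem sixVertexZ_of_w00_eq_zero [IsDomain R] {x y κ : R} (hκ : κ * y = 1)
    {u : Fin (n + 1) → R} (hη : ∀ i i', exchangeFactor x κ (u i) (u i') ≠ 0)
    (v : Fin (n + 1) → R) {i : Fin (n + 1)} (hi : (sixVertex x y κ (u i) (v 0)).w00 = 0) :
    sixVertexZ x y κ u v = (∏ j : Fin n, (sixVertex x y κ (u i) (v j.succ)).w01) *
      (∏ k, (sixVertex x y κ (u (i.succAbove k)) (v 0)).w01) *
        sixVertexZ x y κ (u ∘ i.succAbove) (Fin.tail v) := by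
  rw [← sixVertexZ_comp_perm hκ hη v i.cycleRange.symm, sixVertexZ, asmZ_topLeft]
  simp only [Function.comp_apply, Fin.cycleRange_symm_zero, Fin.cycleRange_symm_succ, hi]
  rw [zero_mul, zero_add, sixVertexZ]
  simp only [sixVertex, one_mul, mul_assoc, Function.comp_apply, Fin.tail]

end SixVertexPartitionFunction

section Degree

open Polynomial

variable {K : Type*} [Field K]

theorem rowTransfer_map_C_mem (S : Submodule K K[X]) (F : List (VertexWeights K)) (h : ℤ)
    (ks : List ℤ) {ψ : List ℤ → K[X]} (hψ : ∀ t, ψ t ∈ S) :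
    rowTransfer (F.map (VertexWeights.map C)) h ks ψ ∈ S := by
  induction F generalizing h ks ψ with
  | nil =>
    cases ks with
    | nil =>
      simp only [List.map_nil, rowTransfer]
      split_ifs
      exacts [hψ [], S.zero_mem]
    | cons => exact S.zero_mem
  | cons c F ih =>
    cases ks with
    | nil => exact S.zero_mem
    | cons k ks =>
      refine S.sum_mem fun r _ => ?_
      rw [VertexWeights.ev_map, ← smul_eq_C_mul]
      exact S.smul_mem _ (ih _ _ fun t => hψ _)

theorem mul_mem_degreeLT {m n : ℕ} {p q : K[X]} (hp : p.natDegree ≤ m) (hq : q ∈ degreeLT K n) :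
    p * q ∈ degreeLT K (m + n) := by
  rw [mem_degreeLT] at *
  calc (p * q).degree ≤ p.degree + q.degree := degree_mul_le p q
    _ ≤ m + q.degree := by gcongr; exact degree_le_of_natDegree_le hp
    _ < m + n := WithBot.add_lt_add_left WithBot.coe_ne_bot hq

theorem prod_mul_mem_degreeLT {m n : ℕ} {p : Fin m → K[X]} (hp : ∀ i, (p i).natDegree ≤ 1)
    {q : K[X]} (hq : q ∈ degreeLT K n) : (∏ i, p i) * q ∈ degreeLT K (m + n) := by
  refine mul_mem_degreeLT ((natDegree_prod_le _ _).trans ?_) hq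
  simpa using sum_le_sum fun i (_ : i ∈ univ) => hp i

theorem stackZ_one_cons_mem_degreeLT {L : List (VertexWeights K[X] × List (VertexWeights K))}
    (hL : ∀ p ∈ L, p.1.w01.natDegree ≤ 1) (ks : List ℤ) :
    stackZ (L.map fun p => p.1 :: p.2.map (VertexWeights.map C)) (1 :: ks) ∈
      degreeLT K (1 + L.length) := by
  induction L generalizing ks with
  | nil =>
    rw [List.length_nil, mem_degreeLT, List.map_nil, stackZ]
    split_ifs <;> simp
  | cons p L ih =>
    rw [List.forall_mem_cons] at hL
    rw [List.map_cons, stackZ, rowTransfer_zero_one, List.length_cons, add_comm L.length]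
    exact mul_mem_degreeLT hL.1 (rowTransfer_map_C_mem _ _ _ _ (ih hL.2))

theorem stackZ_zero_cons_mem_degreeLT {L : List (VertexWeights K[X] × List (VertexWeights K))}
    (h00 : ∀ p ∈ L, p.1.w00.natDegree ≤ 1) (h01 : ∀ p ∈ L, p.1.w01.natDegree ≤ 1)
    (hcp : ∀ p ∈ L, p.1.cp.natDegree ≤ 0) (ks : List ℤ) :
    stackZ (L.map fun p => p.1 :: p.2.map (VertexWeights.map C)) (0 :: ks) ∈
      degreeLT K L.length := by
  induction L generalizing ks with
  | nil =>
    simp only [List.map_nil, stackZ, List.mem_cons, forall_eq_or_imp, zero_ne_one, false_and,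
      if_false]
    exact Submodule.zero_mem _
  | cons p L ih =>
    rw [List.forall_mem_cons] at h00 h01 hcp
    rw [List.map_cons, stackZ, rowTransfer_zero_zero, List.length_cons, add_comm L.length]
    refine Submodule.add_mem _
      (mul_mem_degreeLT h00.1 (rowTransfer_map_C_mem _ _ _ _ (ih h00.2 h01.2 hcp.2))) ?_
    simpa only [zero_add] using mul_mem_degreeLT hcp.1
      (rowTransfer_map_C_mem _ _ _ _ (stackZ_one_cons_mem_degreeLT h01.2))

theorem sixVertexZ_cons_X_mem_degreeLT {n : ℕ} (x y κ : K) (u : Fin (n + 1) → K) (v : Fin n → K) :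
    sixVertexZ (C x) (C y) (C κ) (C ∘ u) (Fin.cons X (C ∘ v) : Fin (n + 1) → K[X]) ∈
      degreeLT K (n + 1) := by
  have h := stackZ_zero_cons_mem_degreeLT (L := (List.ofFn u).map fun a =>
    (sixVertex (C x) (C y) (C κ) (C a) X, (List.ofFn v).map (sixVertex x y κ a)))
    ?_ ?_ ?_ (List.replicate n 0)
  · rw [List.length_map, List.length_ofFn] at h
    rw [sixVertexZ_eq_stackZ, List.replicate_succ]
    convert h using 2
    simp only [List.map_cons, List.map_ofFn, Function.comp_def, List.ofFn_succ, Fin.cons_zero,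
      Fin.cons_succ, map_sixVertex]
  all_goals
    simp only [List.mem_map, forall_exists_index, and_imp, forall_apply_eq_imp_iff₂, sixVertex]
    intro a _
    compute_degree

end Degree

section Vandermonde

variable {R : Type*} [CommRing R] {n : ℕ}

theorem det_vandermonde_cons (t : R) (v : Fin n → R) :
    (Matrix.vandermonde (Fin.cons t v : Fin (n + 1) → R)).det =
      (∏ j, (v j - t)) * (Matrix.vandermonde v).det := by
  simp only [Matrix.det_vandermonde, Fin.prod_univ_succ (n := n), Fin.prod_Ioi_zero,
    Fin.prod_Ioi_succ, Fin.cons_zero, Fin.cons_succ]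

theorem det_vandermonde_succAbove (u : Fin (n + 1) → R) (i : Fin (n + 1)) :
    (Matrix.vandermonde u).det = (-1) ^ (i : ℕ) * ((∏ k, (u (i.succAbove k) - u i)) *
      (Matrix.vandermonde (u ∘ i.succAbove)).det) := by
  have hu : u ∘ i.cycleRange.symm = Fin.cons (u i) (u ∘ i.succAbove) := by
    funext k
    cases k using Fin.cases <;> simp
  have hperm := Matrix.det_permute i.cycleRange.symm (Matrix.vandermonde u)
  rw [Equiv.Perm.sign_symm, Fin.sign_cycleRange] at hperm
  have hsub : (Matrix.vandermonde u).submatrix i.cycleRange.symm id =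
      Matrix.vandermonde (Fin.cons (u i) (u ∘ i.succAbove)) := by
    rw [← hu]
    rfl
  rw [hsub, det_vandermonde_cons] at hperm
  simp only [Function.comp_apply] at hperm
  rw [hperm, Units.val_pow_eq_pow_val, Units.val_neg, Units.val_one, Int.cast_pow, Int.cast_neg,
    Int.cast_one, ← mul_assoc, ← mul_pow, neg_one_mul, neg_neg, one_pow, one_mul]

end Vandermonde

section Izergin

variable {K : Type*} [Field K] {n : ℕ}

/-- The determinant of the entrywise inverse of `w`, cleared of denominators by the product of the
entries of `w`. -/
def izerginDet (w : Matrix (Fin n) (Fin n) K) : K :=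
  (∏ i, ∏ j, w i j) * (w.map (·⁻¹)).det

theorem izerginDet_succ {w : Matrix (Fin (n + 1)) (Fin (n + 1)) K} (hw : ∀ i, w i 0 ≠ 0) :
    izerginDet w = ∑ i : Fin (n + 1), (-1) ^ (i : ℕ) * ((∏ j : Fin n, w i j.succ) *
      izerginDet (w.submatrix i.succAbove Fin.succ)) * ∏ k, w (i.succAbove k) 0 := by
  rw [izerginDet, Matrix.det_succ_column_zero, mul_sum]
  refine sum_congr rfl fun i _ => ?_
  rw [Fin.prod_univ_succAbove _ i, Fin.prod_univ_succ]
  simp only [Fin.prod_univ_succ (n := n), prod_mul_distrib, izerginDet, Matrix.submatrix_apply,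
    Matrix.map_apply, Matrix.submatrix_map]
  field_simp [hw i]

theorem izerginDet_eq_zero_of_column_eq {w : Matrix (Fin n) (Fin n) K} {j j' : Fin n}
    (hj : j ≠ j') (h : ∀ i, w i j = w i j') : izerginDet w = 0 := by
  rw [izerginDet, Matrix.det_zero_of_column_eq hj (by simp [h]), mul_zero]

/-- The product of the weights of a site with parameters `u` and `v` that is occupied by a zero
with partial row sum `0` and partial column sum `0`, respectively `1`. -/
def zeroWeight {R : Type*} [CommRing R] (x κ u v : R) : R :=
  (u * v - κ * (u - 1) * (v - 1)) * (1 - x * κ * (u - 1) * (v - 1))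

theorem zeroWeight_eq {R : Type*} [CommRing R] (x y κ u v : R) :
    zeroWeight x κ u v = (sixVertex x y κ u v).w00 * (sixVertex x y κ u v).w01 := rfl

theorem map_zeroWeight {R S : Type*} [CommRing R] [CommRing S] (φ : R →+* S) (x κ u v : R) :
    φ (zeroWeight x κ u v) = zeroWeight (φ x) (φ κ) (φ u) (φ v) := by
  simp only [zeroWeight, map_mul, map_sub, map_one]

/-- The matrix of the weights `zeroWeight`. -/
def zeroWeightMatrix (x κ : K) (u v : Fin n → K) : Matrix (Fin n) (Fin n) K :=
  Matrix.of fun i j => zeroWeight x κ (u i) (v j)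

/-- The parameters avoid the exceptional values of the Izergin–Korepin evaluation. -/
structure IsGeneric (x κ : K) (u v : Fin n → K) : Prop where
  row_injective : Function.Injective u
  col_injective : Function.Injective v
  zeroWeight_ne : ∀ i j, zeroWeight x κ (u i) (v j) ≠ 0
  row_ne : ∀ i, u i - κ * (u i - 1) ≠ 0
  exchangeFactor_ne : ∀ i i', exchangeFactor x κ (u i) (u i') ≠ 0

theorem IsGeneric.comp {m : ℕ} {x κ : K} {u v : Fin n → K} (h : IsGeneric x κ u v)
    {f g : Fin m → Fin n} (hf : Function.Injective f) (hg : Function.Injective g) :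
    IsGeneric x κ (u ∘ f) (v ∘ g) where
  row_injective := h.row_injective.comp hf
  col_injective := h.col_injective.comp hg
  zeroWeight_ne _ _ := h.zeroWeight_ne _ _
  row_ne _ := h.row_ne _
  exchangeFactor_ne _ _ := h.exchangeFactor_ne _ _

theorem sixVertex_w00_mul_w00_sub {R : Type*} [CommRing R] (x y κ u u' v t : R) :
    (sixVertex x y κ u v).w00 * (sixVertex x y κ u' t).w00 -
      (sixVertex x y κ u' v).w00 * (sixVertex x y κ u t).w00 = κ * ((u' - u) * (v - t)) := by
  simp only [sixVertex]
  ring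

theorem izergin_korepin_of_w00_eq_zero {x y κ : K} (hκ : κ * y = 1) {u : Fin (n + 1) → K}
    {v : Fin n → K} (hη : ∀ i i', exchangeFactor x κ (u i) (u i') ≠ 0) {i : Fin (n + 1)} {t : K}
    (ht : (sixVertex x y κ (u i) t).w00 = 0)
    (ih : κ ^ n.choose 2 * (Matrix.vandermonde (u ∘ i.succAbove)).det *
      (Matrix.vandermonde v).det * sixVertexZ x y κ (u ∘ i.succAbove) v =
        izerginDet (zeroWeightMatrix x κ (u ∘ i.succAbove) v)) :
    κ ^ (n + 1).choose 2 * (Matrix.vandermonde u).det *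
      ((∏ j, (v j - t)) * (Matrix.vandermonde v).det) *
        sixVertexZ x y κ u (Fin.cons t v : Fin (n + 1) → K) =
      (-1) ^ (i : ℕ) * ((∏ j, zeroWeight x κ (u i) (v j)) *
        izerginDet (zeroWeightMatrix x κ (u ∘ i.succAbove) v)) *
          ∏ k, zeroWeight x κ (u (i.succAbove k)) t := by
  have hpair : (∏ j, (sixVertex x y κ (u i) (v j)).w00) *
      ∏ k, (sixVertex x y κ (u (i.succAbove k)) t).w00 =
        κ ^ n * ((∏ k, (u (i.succAbove k) - u i)) * ∏ j, (v j - t)) := by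
    rw [← Fin.prod_const, ← prod_mul_distrib, ← prod_mul_distrib, ← prod_mul_distrib]
    refine prod_congr rfl fun k _ => ?_
    rw [← sixVertex_w00_mul_w00_sub x y, ht, mul_zero, sub_zero]
  rw [← ih, sixVertexZ_of_w00_eq_zero (i := i) hκ hη _ (by rwa [Fin.cons_zero]), Fin.tail_cons,
    det_vandermonde_succAbove u i, Nat.choose_succ_succ' n 1, Nat.choose_one_right, pow_add]
  simp only [Fin.cons_zero, Fin.cons_succ, zeroWeight_eq x y, prod_mul_distrib]
  linear_combination -(κ ^ n.choose 2 * (-1) ^ (i : ℕ) *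
    (Matrix.vandermonde (u ∘ i.succAbove)).det * (Matrix.vandermonde v).det *
    (∏ j, (sixVertex x y κ (u i) (v j)).w01) *
    (∏ k, (sixVertex x y κ (u (i.succAbove k)) t).w01) *
    sixVertexZ x y κ (u ∘ i.succAbove) v) * hpair

section

open Polynomial

/-- The six-vertex side of the Izergin–Korepin evaluation as a polynomial in the parameter of the
first column. -/
noncomputable def partitionPoly (x y κ : K) (u : Fin (n + 1) → K) (v : Fin n → K) : K[X] :=
  C (κ ^ (n + 1).choose 2 * (Matrix.vandermonde u).det * (Matrix.vandermonde v).det) *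
    ((∏ j, (C (v j) - X)) *
      sixVertexZ (C x) (C y) (C κ) (C ∘ u) (Fin.cons X (C ∘ v) : Fin (n + 1) → K[X]))

/-- The determinant side of the Izergin–Korepin evaluation, expanded along the first column, as a
polynomial in the parameter of that column. -/
noncomputable def determinantPoly (x κ : K) (u : Fin (n + 1) → K) (v : Fin n → K) : K[X] :=
  ∑ i : Fin (n + 1), C ((-1) ^ (i : ℕ) * ((∏ j, zeroWeight x κ (u i) (v j)) *
      izerginDet (zeroWeightMatrix x κ (u ∘ i.succAbove) v))) *
    ∏ k, zeroWeight (C x) (C κ) (C (u (i.succAbove k))) X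

theorem degree_partitionPoly_lt (x y κ : K) (u : Fin (n + 1) → K) (v : Fin n → K) :
    (partitionPoly x y κ u v).degree < (2 * n + 1 : ℕ) := by
  rw [← mem_degreeLT, partitionPoly, two_mul, add_assoc, ← smul_eq_C_mul]
  refine Submodule.smul_mem _ _ (prod_mul_mem_degreeLT (fun j => ?_)
    (sixVertexZ_cons_X_mem_degreeLT x y κ u v))
  compute_degree

theorem degree_determinantPoly_lt (x κ : K) (u : Fin (n + 1) → K) (v : Fin n → K) :
    (determinantPoly x κ u v).degree < (2 * n + 1 : ℕ) := by
  rw [← mem_degreeLT, determinantPoly]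
  refine Submodule.sum_mem _ fun i _ => ?_
  simp only [zeroWeight, prod_mul_distrib, two_mul, add_assoc]
  rw [← smul_eq_C_mul, ← mul_one (∏ k, (1 - C x * C κ * (C (u (i.succAbove k)) - 1) * (X - 1)))]
  refine Submodule.smul_mem _ _ (prod_mul_mem_degreeLT (fun k => ?_)
    (prod_mul_mem_degreeLT (fun k => ?_) (mem_degreeLT.2 (by simp))))
  · compute_degree
  · compute_degree

theorem eval_partitionPoly (x y κ t : K) (u : Fin (n + 1) → K) (v : Fin n → K) :
    (partitionPoly x y κ u v).eval t =
      κ ^ (n + 1).choose 2 * (Matrix.vandermonde u).det *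
        ((∏ j, (v j - t)) * (Matrix.vandermonde v).det) *
          sixVertexZ x y κ u (Fin.cons t v : Fin (n + 1) → K) := by
  have hcons : evalRingHom t ∘ (Fin.cons X (C ∘ v) : Fin (n + 1) → K[X]) = Fin.cons t v := by
    funext j
    cases j using Fin.cases <;> simp
  have hZ := map_sixVertexZ (evalRingHom t) (C x) (C y) (C κ) (C ∘ u)
    (Fin.cons X (C ∘ v) : Fin (n + 1) → K[X])
  rw [hcons] at hZ
  simp only [coe_evalRingHom, eval_C, Function.comp_def] at hZ
  simp only [partitionPoly, eval_mul, eval_C, eval_prod, eval_sub, eval_X, Function.comp_def, hZ]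
  ring

theorem eval_determinantPoly (x κ t : K) (u : Fin (n + 1) → K) (v : Fin n → K) :
    (determinantPoly x κ u v).eval t =
      ∑ i : Fin (n + 1), (-1) ^ (i : ℕ) * ((∏ j, zeroWeight x κ (u i) (v j)) *
        izerginDet (zeroWeightMatrix x κ (u ∘ i.succAbove) v)) *
          ∏ k, zeroWeight x κ (u (i.succAbove k)) t := by
  simp only [determinantPoly, eval_finsetSum, eval_mul, eval_C, eval_prod, ← coe_evalRingHom,
    map_zeroWeight]
  simp only [coe_evalRingHom, eval_C, eval_X]

theorem eval_determinantPoly_of_ne {x κ t : K} {u : Fin (n + 1) → K} (v : Fin n → K)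
    (ht : ∀ i, zeroWeight x κ (u i) t ≠ 0) :
    (determinantPoly x κ u v).eval t =
      izerginDet (zeroWeightMatrix x κ u (Fin.cons t v : Fin (n + 1) → K)) := by
  rw [izerginDet_succ ht, eval_determinantPoly]
  rfl

theorem eval_determinantPoly_of_w00_eq_zero {x κ t : K} (y : K) {u : Fin (n + 1) → K}
    (v : Fin n → K) {i : Fin (n + 1)} (ht : (sixVertex x y κ (u i) t).w00 = 0) :
    (determinantPoly x κ u v).eval t =
      (-1) ^ (i : ℕ) * ((∏ j, zeroWeight x κ (u i) (v j)) *
        izerginDet (zeroWeightMatrix x κ (u ∘ i.succAbove) v)) *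
          ∏ k, zeroWeight x κ (u (i.succAbove k)) t := by
  rw [eval_determinantPoly]
  refine sum_eq_single_of_mem i (mem_univ i) fun k _ hk => ?_
  obtain ⟨l, hl⟩ := Fin.exists_succAbove_eq hk.symm
  have hzero : zeroWeight x κ (u (k.succAbove l)) t = 0 := by
    rw [hl, zeroWeight_eq x y, ht, zero_mul]
  rw [prod_eq_zero (f := fun k' => zeroWeight x κ (u (k.succAbove k')) t) (mem_univ l) hzero,
    mul_zero]

end

/-- The value of the first column parameter at which the weight `w00` of a row with parameter `u`
vanishes. -/
def colRoot (κ u : K) : K := κ * (1 - u) / (u - κ * (u - 1))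

theorem sixVertex_colRoot {κ u : K} (x y : K) (hu : u - κ * (u - 1) ≠ 0) :
    (sixVertex x y κ u (colRoot κ u)).w00 = 0 := by
  simp only [sixVertex, colRoot]
  field_simp
  ring

theorem colRoot_inj {κ u u' : K} (hκ : κ ≠ 0) (hu : u - κ * (u - 1) ≠ 0)
    (hu' : u' - κ * (u' - 1) ≠ 0) (h : colRoot κ u = colRoot κ u') : u = u' := by
  have hdet := sixVertex_w00_mul_w00_sub 0 0 κ u u' (colRoot κ u + 1) (colRoot κ u)
  rw [sixVertex_colRoot 0 0 hu, h, sixVertex_colRoot 0 0 hu'] at hdet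
  have hzero : κ * (u' - u) = 0 := by linear_combination -hdet
  exact (sub_eq_zero.1 ((mul_eq_zero.1 hzero).resolve_left hκ)).symm

theorem izergin_korepin {x y κ : K} (hκ : κ * y = 1) {u v : Fin n → K}
    (h : IsGeneric x κ u v) :
    κ ^ n.choose 2 * (Matrix.vandermonde u).det * (Matrix.vandermonde v).det *
      sixVertexZ x y κ u v = izerginDet (zeroWeightMatrix x κ u v) := by
  induction n with
  | zero => simp [sixVertexZ_eq_stackZ, stackZ, izerginDet]
  | succ n ih =>
    obtain ⟨t, v, rfl⟩ : ∃ t v', v = Fin.cons t v' := ⟨_, _, (Fin.cons_self_tail v).symm⟩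
    have ht (i) : zeroWeight x κ (u i) t ≠ 0 := by
      simpa only [Fin.cons_zero] using h.zeroWeight_ne i 0
    have hv (i j) : zeroWeight x κ (u i) (v j) ≠ 0 := by
      simpa only [Fin.cons_succ] using h.zeroWeight_ne i j.succ
    have hroot (i) := sixVertex_colRoot x y (h.row_ne i)
    have hinj : Function.Injective (Sum.elim (fun i => colRoot κ (u i)) v) := by
      refine Function.Injective.sumElim (fun i k hik => ?_)
        (Fin.cons_injective_iff.1 h.col_injective).2 fun i j hij => ?_
      · exact h.row_injective (colRoot_inj (left_ne_zero_of_mul_eq_one hκ) (h.row_ne i)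
          (h.row_ne k) hik)
      · apply hv i j
        rw [zeroWeight_eq x y, ← hij, hroot, zero_mul]
    have hcard : #(univ : Finset (Fin (n + 1) ⊕ Fin n)) = 2 * n + 1 := by
      simp [two_mul, add_right_comm]
    have hpoly : partitionPoly x y κ u v = determinantPoly x κ u v := by
      refine Polynomial.eq_of_degrees_lt_of_eval_index_eq univ hinj.injOn
        (hcard ▸ degree_partitionPoly_lt x y κ u v) (hcard ▸ degree_determinantPoly_lt x κ u v) ?_
      rintro (i | j) -
      · rw [Sum.elim_inl, eval_partitionPoly, eval_determinantPoly_of_w00_eq_zero y v (hroot i)]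
        refine izergin_korepin_of_w00_eq_zero hκ h.exchangeFactor_ne (hroot i) (ih ?_)
        exact h.comp Fin.succAbove_right_injective (Fin.succ_injective n)
      · rw [Sum.elim_inr, eval_partitionPoly, prod_eq_zero (mem_univ j) (sub_self (v j)),
          eval_determinantPoly_of_ne v fun i => hv i j,
          izerginDet_eq_zero_of_column_eq (Fin.succ_ne_zero j).symm fun i => by
            simp [zeroWeightMatrix]]
        ring
    rw [det_vandermonde_cons, ← eval_partitionPoly, hpoly, eval_determinantPoly_of_ne v ht]

end Izergin

section DesnanotJacobi

variable {R : Type*} [CommRing R] {n : ℕ}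

theorem det_toBlocks₁₁_mul_det_pow {m k : Type*} [Fintype m] [Fintype k] [DecidableEq m]
    [DecidableEq k] (M : Matrix (m ⊕ k) (m ⊕ k) R) :
    M.toBlocks₁₁.det * M.det ^ Fintype.card k = M.det * M.adjugate.toBlocks₂₂.det := by
  have h := Matrix.mul_adjugate M
  rw [← Matrix.fromBlocks_toBlocks M, ← Matrix.fromBlocks_toBlocks
    (Matrix.fromBlocks _ _ _ _).adjugate, Matrix.fromBlocks_multiply, ← Matrix.fromBlocks_one,
    Matrix.fromBlocks_smul, Matrix.fromBlocks_inj, Matrix.fromBlocks_toBlocks, smul_zero] at h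
  obtain ⟨-, h₁₂, -, h₂₂⟩ := h
  have hmul : M * Matrix.fromBlocks 1 M.adjugate.toBlocks₁₂ 0 M.adjugate.toBlocks₂₂ =
      Matrix.fromBlocks M.toBlocks₁₁ 0 M.toBlocks₂₁ (M.det • 1) := by
    nth_rw 1 [← Matrix.fromBlocks_toBlocks M]
    rw [Matrix.fromBlocks_multiply, h₁₂, h₂₂]
    simp only [Matrix.mul_one, Matrix.mul_zero, add_zero]
  have hdet := congrArg Matrix.det hmul
  rw [Matrix.det_mul, Matrix.det_fromBlocks_zero₂₁, Matrix.det_fromBlocks_zero₁₂, Matrix.det_one,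
    one_mul, Matrix.det_smul, Matrix.det_one, mul_one] at hdet
  exact hdet.symm

/-- The embedding of `Fin n` as the indices other than `0` and `Fin.last`. -/
def mid (i : Fin n) : Fin (n + 2) := i.succ.castSucc

theorem mid_injective : Function.Injective (mid (n := n)) :=
  (Fin.castSucc_injective _).comp (Fin.succ_injective n)

theorem exists_midSumEndsEquiv (n : ℕ) : ∃ e : Fin n ⊕ Fin 2 ≃ Fin (n + 2),
    (∀ i, e (.inl i) = mid i) ∧ e (.inr 0) = 0 ∧ e (.inr 1) = Fin.last _ := by
  have hinj : Function.Injective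
      (Sum.elim (mid (n := n)) ![0, Fin.last (n + 1)]) := by
    refine Function.Injective.sumElim mid_injective ?_ fun i b => ?_
    · intro a b
      fin_cases a <;> fin_cases b <;> simp [Fin.ext_iff]
    · fin_cases b <;> simp [mid, Fin.ext_iff]
      omega
  exact ⟨Equiv.ofBijective _ ((Fintype.bijective_iff_injective_and_card _).2 ⟨hinj, by simp⟩),
    fun _ => rfl, rfl, rfl⟩

theorem det_mul_desnanot_jacobi (M : Matrix (Fin (n + 2)) (Fin (n + 2)) R) :
    M.det * (M.det * (M.submatrix mid mid).det) =
    M.det * ((M.submatrix Fin.succ Fin.succ).det * (M.submatrix Fin.castSucc Fin.castSucc).det -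
      (M.submatrix Fin.succ Fin.castSucc).det * (M.submatrix Fin.castSucc Fin.succ).det) := by
  obtain ⟨e, hmid, hfirst, hlast⟩ := exists_midSumEndsEquiv n
  have hminor : (M.submatrix e e).toBlocks₁₁ = M.submatrix mid mid := by
    ext i j
    simp only [Matrix.toBlocks₁₁, Matrix.of_apply, Matrix.submatrix_apply, hmid]
  have hsign : (-1 : R) ^ (n + 1) * (-1) ^ (n + 1) = 1 := by
    rw [← mul_pow, neg_one_mul, neg_neg, one_pow]
  have h := det_toBlocks₁₁_mul_det_pow (M.submatrix e e)
  rw [hminor, Matrix.det_submatrix_equiv_self, Matrix.adjugate_submatrix_equiv_self,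
    Fintype.card_fin, Matrix.det_fin_two] at h
  simp only [Matrix.toBlocks₂₂, Matrix.of_apply, Matrix.submatrix_apply, hfirst, hlast,
    Matrix.adjugate_fin_succ_eq_det_submatrix, Fin.succAbove_zero, Fin.succAbove_last,
    Fin.val_zero, Fin.val_last, zero_add, add_zero, pow_zero, one_mul, pow_add _ (n + 1) (n + 1),
    hsign] at h
  linear_combination h - M.det * (M.submatrix Fin.succ Fin.castSucc).det *
    (M.submatrix Fin.castSucc Fin.succ).det * hsign

theorem desnanot_jacobi (M : Matrix (Fin (n + 2)) (Fin (n + 2)) R) :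
    M.det * (M.submatrix mid mid).det =
      (M.submatrix Fin.succ Fin.succ).det * (M.submatrix Fin.castSucc Fin.castSucc).det -
      (M.submatrix Fin.succ Fin.castSucc).det * (M.submatrix Fin.castSucc Fin.succ).det := by
  have h := congrArg (MvPolynomial.eval₂Hom (Int.castRingHom R) fun p => M p.1 p.2)
    (mul_left_cancel₀ (Matrix.det_mvPolynomialX_ne_zero (Fin (n + 2)) ℤ)
      (det_mul_desnanot_jacobi (Matrix.mvPolynomialX _ _ ℤ)))
  simp only [map_mul, map_sub, RingHom.map_det] at h
  convert h using 4 <;> ext <;> simp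

end DesnanotJacobi

section Condensation

theorem prod_succ {M : Type*} [CommMonoid M] {n : ℕ} (f : Fin (n + 2) → M) :
    ∏ i : Fin (n + 1), f i.succ = (∏ i : Fin n, f (mid i)) * f (Fin.last _) :=
  Fin.prod_univ_castSucc _

theorem prod_castSucc {M : Type*} [CommMonoid M] {n : ℕ} (f : Fin (n + 2) → M) :
    ∏ i : Fin (n + 1), f i.castSucc = f 0 * ∏ i : Fin n, f (mid i) :=
  Fin.prod_univ_succ _

theorem prod_eq_prod_mid {M : Type*} [CommMonoid M] {n : ℕ} (f : Fin (n + 2) → M) :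
    ∏ i, f i = f 0 * ((∏ i : Fin n, f (mid i)) * f (Fin.last _)) := by
  rw [Fin.prod_univ_succ, prod_succ]

variable {R : Type*} [CommRing R] {n : ℕ}

theorem prod_prod_mul_prod_prod_mid (f : Fin (n + 2) → Fin (n + 2) → R) :
    (∏ i, ∏ j, f i j) * ∏ i : Fin n, ∏ j : Fin n, f (mid i) (mid j) =
      f 0 (Fin.last _) * f (Fin.last _) 0 * (∏ i : Fin (n + 1), ∏ j : Fin (n + 1),
        f i.succ j.succ) * ∏ i : Fin (n + 1), ∏ j : Fin (n + 1), f i.castSucc j.castSucc := by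
  rw [prod_succ fun i => ∏ j : Fin (n + 1), f i j.succ,
    prod_castSucc fun i => ∏ j : Fin (n + 1), f i j.castSucc, prod_eq_prod_mid]
  simp only [fun i => prod_succ (f i), fun i => prod_castSucc (f i),
    fun i => prod_eq_prod_mid (f i), prod_mul_distrib]
  ring

theorem prod_prod_mul_prod_prod_mid' (f : Fin (n + 2) → Fin (n + 2) → R) :
    (∏ i, ∏ j, f i j) * ∏ i : Fin n, ∏ j : Fin n, f (mid i) (mid j) =
      f 0 0 * f (Fin.last _) (Fin.last _) * (∏ i : Fin (n + 1), ∏ j : Fin (n + 1),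
        f i.succ j.castSucc) * ∏ i : Fin (n + 1), ∏ j : Fin (n + 1), f i.castSucc j.succ := by
  rw [prod_succ fun i => ∏ j : Fin (n + 1), f i j.castSucc,
    prod_castSucc fun i => ∏ j : Fin (n + 1), f i j.succ, prod_eq_prod_mid]
  simp only [fun i => prod_succ (f i), fun i => prod_castSucc (f i),
    fun i => prod_eq_prod_mid (f i), prod_mul_distrib]
  ring

theorem det_vandermonde_condensation (u : Fin (n + 2) → R) :
    (Matrix.vandermonde u).det * (Matrix.vandermonde (u ∘ mid)).det =
      (u (Fin.last _) - u 0) * (Matrix.vandermonde (u ∘ Fin.succ)).det *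
        (Matrix.vandermonde (u ∘ Fin.castSucc)).det := by
  have expand {m : ℕ} (w : Fin (m + 1) → R) : (Matrix.vandermonde w).det =
      (∏ j : Fin m, (w j.succ - w 0)) * (Matrix.vandermonde (w ∘ Fin.succ)).det := by
    conv_lhs => rw [← Fin.cons_self_tail w]
    exact det_vandermonde_cons _ _
  have hm : (u ∘ Fin.castSucc) ∘ Fin.succ = u ∘ mid := rfl
  rw [expand u, expand (u ∘ Fin.castSucc), Fin.prod_univ_castSucc, hm]
  simp only [Function.comp_apply, Fin.succ_last, Fin.castSucc_zero, Fin.succ_castSucc]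
  ring

theorem izerginDet_condensation {K : Type*} [Field K] (w : Matrix (Fin (n + 2)) (Fin (n + 2)) K) :
    izerginDet w * izerginDet (w.submatrix mid mid) =
      w 0 (Fin.last _) * w (Fin.last _) 0 * izerginDet (w.submatrix Fin.succ Fin.succ) *
        izerginDet (w.submatrix Fin.castSucc Fin.castSucc) -
      w 0 0 * w (Fin.last _) (Fin.last _) * izerginDet (w.submatrix Fin.succ Fin.castSucc) *
        izerginDet (w.submatrix Fin.castSucc Fin.succ) := by
  have hdet := desnanot_jacobi (w.map (·⁻¹))
  have hmain := prod_prod_mul_prod_prod_mid w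
  have hanti := prod_prod_mul_prod_prod_mid' w
  simp only [izerginDet, Matrix.submatrix_apply, ← Matrix.submatrix_map]
  linear_combination (∏ i, ∏ j, w i j) * (∏ i : Fin n, ∏ j : Fin n, w (mid i) (mid j)) * hdet +
    ((w.map (·⁻¹)).submatrix Fin.succ Fin.succ).det *
      ((w.map (·⁻¹)).submatrix Fin.castSucc Fin.castSucc).det * hmain -
    ((w.map (·⁻¹)).submatrix Fin.succ Fin.castSucc).det *
      ((w.map (·⁻¹)).submatrix Fin.castSucc Fin.succ).det * hanti

theorem pow_choose_two_condensation {M : Type*} [CommMonoid M] (a : M) (n : ℕ) :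
    a ^ (n + 2).choose 2 * a ^ n.choose 2 = (a ^ (n + 1).choose 2) ^ 2 * a := by
  rw [← pow_add, ← pow_mul, ← pow_succ, Nat.choose_succ_succ' (n + 1) 1, Nat.choose_succ_succ' n 1,
    Nat.choose_one_right, Nat.choose_one_right]
  ring_nf

theorem sixVertexZ_condensation_of_isGeneric {K : Type*} [Field K] {x y κ : K} (hκ : κ * y = 1)
    {u v : Fin (n + 2) → K} (h : IsGeneric x κ u v) :
    κ * ((u 0 - u (Fin.last _)) * (v 0 - v (Fin.last _))) * sixVertexZ x y κ u v *
        sixVertexZ x y κ (u ∘ mid) (v ∘ mid) =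
      zeroWeight x κ (u 0) (v (Fin.last _)) * zeroWeight x κ (u (Fin.last _)) (v 0) *
        sixVertexZ x y κ (u ∘ Fin.succ) (v ∘ Fin.succ) *
        sixVertexZ x y κ (u ∘ Fin.castSucc) (v ∘ Fin.castSucc) -
      zeroWeight x κ (u 0) (v 0) * zeroWeight x κ (u (Fin.last _)) (v (Fin.last _)) *
        sixVertexZ x y κ (u ∘ Fin.succ) (v ∘ Fin.castSucc) *
        sixVertexZ x y κ (u ∘ Fin.castSucc) (v ∘ Fin.succ) := by
  have hs := Fin.succ_injective (n + 1)
  have hc := Fin.castSucc_injective (n + 1)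
  have minor {m : ℕ} {f g : Fin m → Fin (n + 2)} (hf : Function.Injective f)
      (hg : Function.Injective g) :
      izerginDet ((zeroWeightMatrix x κ u v).submatrix f g) = κ ^ m.choose 2 *
        (Matrix.vandermonde (u ∘ f)).det * (Matrix.vandermonde (v ∘ g)).det *
        sixVertexZ x y κ (u ∘ f) (v ∘ g) :=
    (izergin_korepin hκ (h.comp hf hg)).symm
  have hdet := izerginDet_condensation (zeroWeightMatrix x κ u v)
  rw [← izergin_korepin hκ h, minor mid_injective mid_injective, minor hs hs, minor hc hc,
    minor hs hc, minor hc hs] at hdet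
  have hne (f : Fin (n + 1) → Fin (n + 2)) (hf : Function.Injective f) :
      (Matrix.vandermonde (u ∘ f)).det ≠ 0 ∧ (Matrix.vandermonde (v ∘ f)).det ≠ 0 :=
    ⟨Matrix.det_vandermonde_ne_zero_iff.2 (h.row_injective.comp hf),
      Matrix.det_vandermonde_ne_zero_iff.2 (h.col_injective.comp hf)⟩
  have hlead : κ ^ (n + 2).choose 2 * (Matrix.vandermonde u).det * (Matrix.vandermonde v).det *
      (κ ^ n.choose 2 * (Matrix.vandermonde (u ∘ mid)).det * (Matrix.vandermonde (v ∘ mid)).det) =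
      (κ ^ (n + 1).choose 2) ^ 2 * ((Matrix.vandermonde (u ∘ Fin.succ)).det *
        (Matrix.vandermonde (u ∘ Fin.castSucc)).det * ((Matrix.vandermonde (v ∘ Fin.succ)).det *
        (Matrix.vandermonde (v ∘ Fin.castSucc)).det)) *
      (κ * ((u 0 - u (Fin.last _)) * (v 0 - v (Fin.last _)))) := by
    calc
      _ = κ ^ (n + 2).choose 2 * κ ^ n.choose 2 *
          ((Matrix.vandermonde u).det * (Matrix.vandermonde (u ∘ mid)).det) *
          ((Matrix.vandermonde v).det * (Matrix.vandermonde (v ∘ mid)).det) := by ring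
      _ = _ := by
        rw [pow_choose_two_condensation, det_vandermonde_condensation u,
          det_vandermonde_condensation v]
        ring
  refine mul_left_cancel₀ (mul_ne_zero (pow_ne_zero 2 (pow_ne_zero ((n + 1).choose 2)
    (left_ne_zero_of_mul_eq_one hκ))) (mul_ne_zero (mul_ne_zero (hne _ hs).1 (hne _ hc).1)
    (mul_ne_zero (hne _ hs).2 (hne _ hc).2))) ?_
  simp only [zeroWeightMatrix, Matrix.of_apply] at hdet
  linear_combination hdet - sixVertexZ x y κ u v * sixVertexZ x y κ (u ∘ mid) (v ∘ mid) * hlead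

theorem map_ne_zero_of_map_eq_one {A S K : Type*} [Semiring A] [Semiring S] [Nontrivial S]
    [Semiring K] {φ : A →+* K} (hφ : Function.Injective φ) (ε : A →+* S) {a : A} (ha : ε a = 1) :
    φ a ≠ 0 := by
  rw [Ne, map_eq_zero_iff φ hφ]
  rintro rfl
  exact zero_ne_one ((map_zero ε).symm.trans ha)

theorem isGeneric_map {A S K : Type*} [CommRing A] [CommRing S] [Nontrivial S] [Field K]
    {φ : A →+* K} (hφ : Function.Injective φ) (ε : A →+* S) {n : ℕ} {u v : Fin n → A}
    (hu : Function.Injective u) (hv : Function.Injective v) (hεu : ∀ i, ε (u i) = 1)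
    (hεv : ∀ j, ε (v j) = 1) (x κ : A) : IsGeneric (φ x) (φ κ) (φ ∘ u) (φ ∘ v) := by
  have hne {a : A} : ε a = 1 → φ a ≠ 0 := map_ne_zero_of_map_eq_one hφ ε
  refine ⟨hφ.comp hu, hφ.comp hv, fun i j => ?_, fun i => ?_, fun i i' => ?_⟩
  · rw [Function.comp_apply, Function.comp_apply, ← map_zeroWeight]
    exact hne (by simp [zeroWeight, hεu, hεv])
  · simpa only [map_sub, map_mul, map_one, Function.comp_apply] using
      hne (a := u i - κ * (u i - 1)) (by simp [hεu])
  · simpa only [exchangeFactor, map_add, map_sub, map_mul, map_one, Function.comp_apply] using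
      hne (a := exchangeFactor x κ (u i) (u i')) (by simp [exchangeFactor, hεu, add_comm])

theorem sixVertexZ_condensation {R : Type*} [CommRing R] [IsDomain R] {x y κ : R} (hκ : κ * y = 1)
    {n : ℕ} (u v : Fin (n + 2) → R) :
    κ * ((u 0 - u (Fin.last _)) * (v 0 - v (Fin.last _))) * sixVertexZ x y κ u v *
        sixVertexZ x y κ (u ∘ mid) (v ∘ mid) =
      zeroWeight x κ (u 0) (v (Fin.last _)) * zeroWeight x κ (u (Fin.last _)) (v 0) *
        sixVertexZ x y κ (u ∘ Fin.succ) (v ∘ Fin.succ) *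
        sixVertexZ x y κ (u ∘ Fin.castSucc) (v ∘ Fin.castSucc) -
      zeroWeight x κ (u 0) (v 0) * zeroWeight x κ (u (Fin.last _)) (v (Fin.last _)) *
        sixVertexZ x y κ (u ∘ Fin.succ) (v ∘ Fin.castSucc) *
        sixVertexZ x y κ (u ∘ Fin.castSucc) (v ∘ Fin.succ) := by
  let A := MvPolynomial (Fin (n + 2) ⊕ Fin (n + 2)) R
  let φ : A →+* FractionRing A := algebraMap A (FractionRing A)
  have hφ : Function.Injective φ := FaithfulSMul.algebraMap_injective _ _
  have hX : Function.Injective (MvPolynomial.X : _ → A) := MvPolynomial.X_injective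
  have hgeneric := sixVertexZ_condensation_of_isGeneric (y := φ (MvPolynomial.C y))
    (by rw [← map_mul, ← map_mul, hκ, map_one, map_one])
    (isGeneric_map hφ (MvPolynomial.eval 1) (hX.comp Sum.inl_injective)
      (hX.comp Sum.inr_injective) (fun _ => MvPolynomial.eval_X _) (fun _ => MvPolynomial.eval_X _)
      (MvPolynomial.C x) (MvPolynomial.C κ))
  simp only [Function.comp_assoc, Function.comp_apply, ← map_sixVertexZ, ← map_zeroWeight,
    ← map_mul, ← map_sub] at hgeneric
  have h := congrArg (MvPolynomial.eval (Sum.elim u v)) (hφ hgeneric)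
  simpa only [map_mul, map_sub, map_sixVertexZ, map_zeroWeight, Function.comp_def,
    MvPolynomial.eval_X, MvPolynomial.eval_C, Sum.elim_inl, Sum.elim_inr] using h

end Condensation

section Corners

variable {R : Type*} [CommRing R] {n : ℕ}

theorem freeze_apply (f : Fin n → Fin n → VertexWeights R) (p : Fin n × Fin n) (i j : Fin n) :
    freeze f p i j = if i = p.1 ∧ j = p.2 then VertexWeights.frozen else f i j := by
  simp only [freeze, Prod.ext_iff]

theorem freeze_reflect (f : Fin n → Fin n → VertexWeights R) (p : Fin n × Fin n) :
    freeze (fun i j => (f i j.rev).reflect) p =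
      fun i j => (freeze f (p.1, p.2.rev) i j.rev).reflect := by
  funext i j
  simp only [freeze, Prod.ext_iff, Fin.rev_inj]
  split_ifs <;> rfl

theorem freeze_swap (f : Fin n → Fin n → VertexWeights R) (p : Fin n × Fin n) :
    freeze (fun i j => (f j i).swap) p = fun i j => (freeze f p.swap j i).swap := by
  funext i j
  simp only [freeze, Prod.ext_iff, Prod.fst_swap, Prod.snd_swap, and_comm]
  split_ifs <;> rfl

theorem asmZ_topRight (f : Fin (n + 1) → Fin (n + 1) → VertexWeights R) :
    asmZ f = (f 0 (Fin.last n)).w10 * asmZ (freeze f (0, Fin.last n)) + (f 0 (Fin.last n)).cp *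
      ((∏ j : Fin n, (f 0 j.castSucc).w00) * ((∏ i : Fin n, (f i.succ (Fin.last n)).w11) *
        asmZ fun i j : Fin n => f i.succ j.castSucc)) := by
  rw [← asmZ_reflect f, asmZ_topLeft, freeze_reflect, asmZ_reflect,
    ← asmZ_reflect fun i j : Fin n => f i.succ j.castSucc,
    ← Equiv.prod_comp Fin.revPerm fun j : Fin n => (f 0 j.castSucc).w00]
  simp only [VertexWeights.reflect, Fin.rev_zero, Fin.rev_succ, Fin.revPerm_apply]

theorem asmZ_bottomLeft (f : Fin (n + 1) → Fin (n + 1) → VertexWeights R) :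
    asmZ f = (f (Fin.last n) 0).w01 * asmZ (freeze f (Fin.last n, 0)) + (f (Fin.last n) 0).cp *
      ((∏ i : Fin n, (f i.castSucc 0).w00) * ((∏ j : Fin n, (f (Fin.last n) j.succ).w11) *
        asmZ fun i j : Fin n => f i.castSucc j.succ)) := by
  rw [← asmZ_swap f, asmZ_topRight, freeze_swap, asmZ_swap,
    ← asmZ_swap fun i j : Fin n => f i.castSucc j.succ]
  rfl

theorem asmZ_bottomRight (f : Fin (n + 1) → Fin (n + 1) → VertexWeights R) :
    asmZ f = (f (Fin.last n) (Fin.last n)).w11 * asmZ (freeze f (Fin.last n, Fin.last n)) +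
      (f (Fin.last n) (Fin.last n)).cp * ((∏ i : Fin n, (f i.castSucc (Fin.last n)).w10) *
        ((∏ j : Fin n, (f (Fin.last n) j.castSucc).w01) *
          asmZ fun i j : Fin n => f i.castSucc j.castSucc)) := by
  rw [← asmZ_reflect f, asmZ_bottomLeft, freeze_reflect, asmZ_reflect,
    ← asmZ_reflect fun i j : Fin n => f i.castSucc j.castSucc,
    ← Equiv.prod_comp Fin.revPerm fun j : Fin n => (f (Fin.last n) j.castSucc).w01]
  simp only [VertexWeights.reflect, Fin.rev_zero, Fin.rev_succ, Fin.revPerm_apply]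

end Corners

section CornerDependence

variable {R : Type*} [CommRing R] {n : ℕ} {x y κ : R}

theorem sixVertex_eq_of_eq_one {u v : R} (h : u = 1 ∨ v = 1) :
    sixVertex x y κ u v = sixVertex x y 0 u v := by
  rcases h with rfl | rfl <;> simp [sixVertex]

theorem sixVertexZ_one_one :
    sixVertexZ x y κ (1 : Fin n → R) 1 = sixVertexZ x y 0 (1 : Fin n → R) 1 := by
  simp only [sixVertexZ, Pi.one_apply, sixVertex_eq_of_eq_one (κ := κ) (.inl rfl)]

theorem freeze_congr {f g : Fin n → Fin n → VertexWeights R} {p : Fin n × Fin n}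
    (h : ∀ i j, (i, j) ≠ p → f i j = g i j) : freeze f p = freeze g p := by
  funext i j
  by_cases hp : (i, j) = p
  · simp only [freeze, hp, if_true]
  · simpa only [freeze, hp, if_false] using h i j hp

/-- The partition function with the site `p` frozen and all other weights taken at `κ = 0`. -/
noncomputable def frozenZ (x y : R) (u v : Fin n → R) (p : Fin n × Fin n) : R :=
  asmZ (freeze (fun i j => sixVertex x y 0 (u i) (v j)) p)

theorem asmZ_freeze_sixVertex {u v : Fin n → R} {p : Fin n × Fin n}
    (hu : ∀ i ≠ p.1, u i = 1) (hv : ∀ j ≠ p.2, v j = 1) :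
    asmZ (freeze (fun i j => sixVertex x y κ (u i) (v j)) p) = frozenZ x y u v p := by
  refine congrArg asmZ (freeze_congr fun i j hp => sixVertex_eq_of_eq_one ?_)
  by_cases hi : i = p.1
  · exact .inr (hv j fun hj => hp (Prod.ext hi hj))
  · exact .inl (hu i hi)

theorem sixVertexZ_topLeft {u v : Fin (n + 1) → R} (hu : u ∘ Fin.succ = 1)
    (hv : v ∘ Fin.succ = 1) : sixVertexZ x y κ u v =
      (sixVertex x y κ (u 0) (v 0)).w00 * frozenZ x y u v (0, 0) +
        sixVertexZ x y 0 (1 : Fin n → R) 1 := by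
  have hu' (i : Fin n) : u i.succ = 1 := congrFun hu i
  have hv' (i : Fin n) : v i.succ = 1 := congrFun hv i
  rw [sixVertexZ, asmZ_topLeft, asmZ_freeze_sixVertex (by simpa [Fin.forall_fin_succ] using hu')
    (by simpa [Fin.forall_fin_succ] using hv')]
  simp only [hu', hv']
  simp [sixVertexZ, sixVertex]

theorem sixVertexZ_bottomRight {u v : Fin (n + 1) → R} (hu : u ∘ Fin.castSucc = 1)
    (hv : v ∘ Fin.castSucc = 1) : sixVertexZ x y κ u v =
      (sixVertex x y κ (u (Fin.last n)) (v (Fin.last n))).w11 *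
        frozenZ x y u v (Fin.last n, Fin.last n) + sixVertexZ x y 0 (1 : Fin n → R) 1 := by
  have hu' (i : Fin n) : u i.castSucc = 1 := congrFun hu i
  have hv' (j : Fin n) : v j.castSucc = 1 := congrFun hv j
  rw [sixVertexZ, asmZ_bottomRight,
    asmZ_freeze_sixVertex (by simpa [Fin.forall_fin_succ'] using hu')
      (by simpa [Fin.forall_fin_succ'] using hv')]
  simp only [hu', hv']
  simp [sixVertexZ, sixVertex]

theorem sixVertexZ_topRight {u v : Fin (n + 1) → R} (hu : u ∘ Fin.succ = 1)
    (hv : v ∘ Fin.castSucc = 1) : sixVertexZ x y κ u v =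
      (sixVertex x y κ (u 0) (v (Fin.last n))).w10 * frozenZ x y u v (0, Fin.last n) +
        (x * (u 0 * v (Fin.last n))) ^ n * sixVertexZ x y 0 (1 : Fin n → R) 1 := by
  have hu' (i : Fin n) : u i.succ = 1 := congrFun hu i
  have hv' (j : Fin n) : v j.castSucc = 1 := congrFun hv j
  rw [sixVertexZ, asmZ_topRight,
    asmZ_freeze_sixVertex (by simpa [Fin.forall_fin_succ] using hu')
      (by simpa [Fin.forall_fin_succ'] using hv')]
  simp only [hu', hv']
  simp only [sixVertexZ, sixVertex, sub_self, mul_zero, zero_mul, sub_zero, one_mul, mul_one,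
    prod_const, card_univ, Fintype.card_fin, Pi.one_apply]
  ring

theorem sixVertexZ_bottomLeft {u v : Fin (n + 1) → R} (hu : u ∘ Fin.castSucc = 1)
    (hv : v ∘ Fin.succ = 1) : sixVertexZ x y κ u v =
      (sixVertex x y κ (u (Fin.last n)) (v 0)).w01 * frozenZ x y u v (Fin.last n, 0) +
        (x * (u (Fin.last n) * v 0)) ^ n * sixVertexZ x y 0 (1 : Fin n → R) 1 := by
  have hu' (i : Fin n) : u i.castSucc = 1 := congrFun hu i
  have hv' (j : Fin n) : v j.succ = 1 := congrFun hv j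
  rw [sixVertexZ, asmZ_bottomLeft,
    asmZ_freeze_sixVertex (by simpa [Fin.forall_fin_succ'] using hu')
      (by simpa [Fin.forall_fin_succ] using hv')]
  simp only [hu', hv']
  simp only [sixVertexZ, sixVertex, sub_self, mul_zero, zero_mul, sub_zero, one_mul, mul_one,
    prod_const, card_univ, Fintype.card_fin, Pi.one_apply]
  ring

/-- Freezing of the four corners. -/
def freezeCorners (f : Fin (n + 2) → Fin (n + 2) → VertexWeights R) :
    Fin (n + 2) → Fin (n + 2) → VertexWeights R :=
  freeze (freeze (freeze (freeze f (0, 0)) (0, Fin.last _)) (Fin.last _, 0))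
    (Fin.last _, Fin.last _)

/-- The partition function with the four corners frozen and all other weights taken at `κ = 0`. -/
noncomputable def frozenCornersZ (x y : R) (u v : Fin (n + 2) → R) : R :=
  asmZ (freezeCorners fun i j => sixVertex x y 0 (u i) (v j))

theorem eq_one_or_eq_zero_or_eq_last {u : Fin (n + 2) → R} (hu : u ∘ mid = 1)
    (i : Fin (n + 2)) : u i = 1 ∨ i = 0 ∨ i = Fin.last _ := by
  induction i using Fin.cases with
  | zero => exact .inr (.inl rfl)
  | succ i =>
    induction i using Fin.lastCases with
    | last => exact .inr (.inr rfl)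
    | cast k => exact .inl (congrFun hu k)

theorem asmZ_freezeCorners_sixVertex {u v : Fin (n + 2) → R} (hu : u ∘ mid = 1)
    (hv : v ∘ mid = 1) :
    asmZ (freezeCorners fun i j => sixVertex x y κ (u i) (v j)) = frozenCornersZ x y u v := by
  refine congrArg asmZ ?_
  funext i j
  simp only [freezeCorners, freeze, Prod.ext_iff]
  split_ifs with h1 h2 h3 h4
  · rfl
  · rfl
  · rfl
  · rfl
  rcases eq_one_or_eq_zero_or_eq_last hu i with hi | hi
  · exact sixVertex_eq_of_eq_one (.inl hi)
  rcases eq_one_or_eq_zero_or_eq_last hv j with hj | hj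
  · exact sixVertex_eq_of_eq_one (.inr hj)
  · tauto

theorem sixVertexZ_topCorners {u v : Fin (n + 2) → R} (hu : u ∘ mid = 1) (hv : v ∘ mid = 1) :
    sixVertexZ x y κ u v = (sixVertex x y κ (u 0) (v 0)).w00 *
      ((sixVertex x y κ (u 0) (v (Fin.last _))).w10 *
        asmZ (freeze (freeze (fun i j => sixVertex x y κ (u i) (v j)) (0, 0)) (0, Fin.last _)) +
        (x * (u 0 * v (Fin.last _))) ^ n *
          ((sixVertex x y κ (u (Fin.last _)) (v (Fin.last _))).w11 *
            sixVertexZ x y κ (u ∘ Fin.succ) (v ∘ Fin.castSucc))) +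
      (sixVertex x y κ (u 0) (v (Fin.last _))).w10 *
        ((sixVertex x y κ (u (Fin.last _)) (v 0)).w01 *
          sixVertexZ x y κ (u ∘ Fin.succ) (v ∘ Fin.succ)) := by
  have hu' (i : Fin n) : u i.castSucc.succ = 1 := congrFun hu i
  have hv' (j : Fin n) : v j.castSucc.succ = 1 := congrFun hv j
  rw [sixVertexZ, asmZ_topLeft, Fin.prod_univ_castSucc, Fin.prod_univ_castSucc, asmZ_topRight,
    Fin.prod_univ_succ, Fin.prod_univ_castSucc fun i => (freeze _ _ (Fin.succ i) _).w11]
  simp only [sixVertex, freeze_apply, Fin.last_eq_zero_iff, Nat.add_eq_zero_iff, one_ne_zero,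
    and_false, ↓reduceIte, Fin.castSucc_zero, and_self, VertexWeights.frozen, Fin.castSucc_succ,
    Fin.succ_ne_zero, hv', mul_one, sub_self, mul_zero, sub_zero, zero_mul, zero_add, add_zero,
    prod_const, card_univ, Fintype.card_fin, one_mul, hu', Fin.succ_last, Nat.succ_eq_add_one,
    Fin.castSucc_eq_zero_iff, false_and, sixVertexZ, Function.comp_apply]
  ring

theorem freeze_topCorners_castSucc_succ (f : Fin (n + 2) → Fin (n + 2) → VertexWeights R) :
    (fun i j : Fin (n + 1) => freeze (freeze f (0, 0)) (0, Fin.last _) i.castSucc j.succ) =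
      freeze (fun i j => f i.castSucc j.succ) (0, Fin.last _) := by
  funext i j
  simp [freeze_apply]

theorem freeze_threeCorners_castSucc_castSucc (f : Fin (n + 2) → Fin (n + 2) → VertexWeights R) :
    (fun i j : Fin (n + 1) =>
      freeze (freeze (freeze f (0, 0)) (0, Fin.last _)) (Fin.last _, 0) i.castSucc j.castSucc) =
      freeze (fun i j => f i.castSucc j.castSucc) (0, 0) := by
  funext i j
  simp [freeze_apply]

theorem asmZ_freeze_topCorners {u v : Fin (n + 2) → R} (hu : u ∘ mid = 1) (hv : v ∘ mid = 1) :
    asmZ (freeze (freeze (fun i j => sixVertex x y κ (u i) (v j)) (0, 0)) (0, Fin.last _)) =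
      (sixVertex x y κ (u (Fin.last _)) (v 0)).w01 *
        ((sixVertex x y κ (u (Fin.last _)) (v (Fin.last _))).w11 * frozenCornersZ x y u v +
          frozenZ x y (u ∘ Fin.castSucc) (v ∘ Fin.castSucc) (0, 0)) +
      (x * (u (Fin.last _) * v 0)) ^ n *
        ((sixVertex x y κ (u (Fin.last _)) (v (Fin.last _))).w11 *
          frozenZ x y (u ∘ Fin.castSucc) (v ∘ Fin.succ) (0, Fin.last _)) := by
  have hu' (i : Fin n) : u i.castSucc.succ = 1 := congrFun hu i
  have hv' (j : Fin n) : v j.castSucc.succ = 1 := congrFun hv j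
  rw [← asmZ_freezeCorners_sixVertex (κ := κ) hu hv,
    ← asmZ_freeze_sixVertex (κ := κ) (p := (0, 0)) (by simpa [Fin.forall_fin_succ] using hu')
      (by simpa [Fin.forall_fin_succ] using hv'),
    ← asmZ_freeze_sixVertex (κ := κ) (p := (0, Fin.last _))
      (by simpa [Fin.forall_fin_succ] using hu') (by simpa [Fin.forall_fin_succ'] using hv'),
    asmZ_bottomLeft, Fin.prod_univ_succ, Fin.prod_univ_castSucc, asmZ_bottomRight,
    Fin.prod_univ_succ, Fin.prod_univ_succ fun j => (freeze _ _ _ (Fin.castSucc j)).w01,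
    freeze_topCorners_castSucc_succ, freeze_threeCorners_castSucc_castSucc]
  simp only [sixVertex, freeze_apply, Fin.last_eq_zero_iff, Nat.add_eq_zero_iff, one_ne_zero,
    and_false, Fin.zero_eq_last_iff, and_self, ↓reduceIte, and_true, Fin.castSucc_zero,
    VertexWeights.frozen, Fin.castSucc_succ, Fin.succ_eq_last_succ, Nat.succ_eq_add_one,
    Fin.castSucc_ne_last, Fin.succ_ne_zero, hu', one_mul, sub_self, mul_zero, zero_mul, sub_zero,
    mul_one, add_zero, zero_add, prod_const_one, hv', prod_const, card_univ, Fintype.card_fin,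
    Fin.succ_last, freezeCorners, Function.comp_apply, add_right_inj]
  ring

theorem sixVertexZ_corners {u v : Fin (n + 2) → R} (hu : u ∘ mid = 1) (hv : v ∘ mid = 1) :
    sixVertexZ x y κ u v =
      (sixVertex x y κ (u 0) (v (Fin.last _))).w10 * (sixVertex x y κ (u (Fin.last _)) (v 0)).w01 *
        ((sixVertex x y κ (u 0) (v 0)).w00 *
          ((sixVertex x y κ (u (Fin.last _)) (v (Fin.last _))).w11 * frozenCornersZ x y u v +
            frozenZ x y (u ∘ Fin.castSucc) (v ∘ Fin.castSucc) (0, 0)) +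
          sixVertexZ x y κ (u ∘ Fin.succ) (v ∘ Fin.succ)) +
      (sixVertex x y κ (u 0) (v 0)).w00 * (sixVertex x y κ (u (Fin.last _)) (v (Fin.last _))).w11 *
        ((x * (u 0 * v (Fin.last _))) ^ n * sixVertexZ x y κ (u ∘ Fin.succ) (v ∘ Fin.castSucc) +
          (x * (u (Fin.last _) * v 0)) ^ n * ((sixVertex x y κ (u 0) (v (Fin.last _))).w10 *
            frozenZ x y (u ∘ Fin.castSucc) (v ∘ Fin.succ) (0, Fin.last _))) := by
  rw [sixVertexZ_topCorners hu hv, asmZ_freeze_topCorners hu hv]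
  ring

theorem sixVertex_w11 (u v : R) :
    (sixVertex x y κ u v).w11 = x * (sixVertex x y κ u v).w00 := rfl

theorem sixVertex_w10 (u v : R) : (sixVertex x y κ u v).w10 = (sixVertex x y κ u v).w01 := rfl

theorem sixVertex_w00_mul_w00 (u u' v v' : R) :
    (sixVertex x y κ u v').w00 * (sixVertex x y κ u' v).w00 =
      (sixVertex x y κ u v).w00 * (sixVertex x y κ u' v').w00 + κ * ((u - u') * (v - v')) := by
  simp only [sixVertex]
  ring

theorem sixVertex_w01_mul_w01 (u u' v v' : R) :
    (sixVertex x y κ u v).w01 * (sixVertex x y κ u' v').w01 =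
      (sixVertex x y κ u v').w01 * (sixVertex x y κ u' v).w01 - x * κ * ((u - u') * (v - v')) := by
  simp only [sixVertex]
  ring

theorem frozenCornersZ_condensation [IsDomain R] (hκ : κ * y = 1) {u v : Fin (n + 2) → R}
    (hu : u ∘ mid = 1) (hv : v ∘ mid = 1)
    (hfirst : (sixVertex x y κ (u 0) (v 0)).w00 ≠ 0)
    (hlast : (sixVertex x y κ (u (Fin.last _)) (v (Fin.last _))).w00 ≠ 0)
    (hfl : (sixVertex x y κ (u 0) (v (Fin.last _))).w01 ≠ 0)
    (hlf : (sixVertex x y κ (u (Fin.last _)) (v 0)).w01 ≠ 0) :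
    x * κ * ((u 0 - u (Fin.last _)) * (v 0 - v (Fin.last _))) *
      (frozenCornersZ x y u v * sixVertexZ x y 0 (1 : Fin n → R) 1 -
        frozenZ x y (u ∘ Fin.castSucc) (v ∘ Fin.castSucc) (0, 0) *
          frozenZ x y (u ∘ Fin.succ) (v ∘ Fin.succ) (Fin.last _, Fin.last _) -
        frozenZ x y (u ∘ Fin.castSucc) (v ∘ Fin.succ) (0, Fin.last _) *
          frozenZ x y (u ∘ Fin.succ) (v ∘ Fin.castSucc) (Fin.last _, 0)) =
      sixVertexZ x y κ (u ∘ Fin.succ) (v ∘ Fin.succ) *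
        sixVertexZ x y κ (u ∘ Fin.castSucc) (v ∘ Fin.castSucc) -
      sixVertexZ x y κ (u ∘ Fin.succ) (v ∘ Fin.castSucc) *
        sixVertexZ x y κ (u ∘ Fin.castSucc) (v ∘ Fin.succ) := by
  have condensation := sixVertexZ_condensation hκ (x := x) u v
  have hss := sixVertexZ_bottomRight (x := x) (y := y) (κ := κ) (u := u ∘ Fin.succ)
    (v := v ∘ Fin.succ) hu hv
  have hcc := sixVertexZ_topLeft (x := x) (y := y) (κ := κ) (u := u ∘ Fin.castSucc)
    (v := v ∘ Fin.castSucc) hu hv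
  have hsc := sixVertexZ_bottomLeft (x := x) (y := y) (κ := κ) (u := u ∘ Fin.succ)
    (v := v ∘ Fin.castSucc) hu hv
  have hcs := sixVertexZ_topRight (x := x) (y := y) (κ := κ) (u := u ∘ Fin.castSucc)
    (v := v ∘ Fin.succ) hu hv
  have w00 := sixVertex_w00_mul_w00 (x := x) (y := y) (κ := κ) (u 0) (u (Fin.last _)) (v 0)
    (v (Fin.last _))
  have w01 := sixVertex_w01_mul_w01 (x := x) (y := y) (κ := κ) (u 0) (u (Fin.last _)) (v 0)
    (v (Fin.last _))
  rw [hu, hv, sixVertexZ_one_one, sixVertexZ_corners hu hv] at condensation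
  simp only [zeroWeight_eq x y, sixVertex_w11, sixVertex_w10, Function.comp_apply, Fin.succ_last,
    Fin.castSucc_zero] at condensation hss hcc hsc hcs
  generalize (sixVertex x y κ (u 0) (v 0)).w00 = a at *
  generalize (sixVertex x y κ (u 0) (v (Fin.last _))).w01 = b at *
  generalize (sixVertex x y κ (u (Fin.last _)) (v 0)).w01 = c at *
  generalize (sixVertex x y κ (u (Fin.last _)) (v (Fin.last _))).w00 = d at *
  generalize sixVertexZ x y κ (u ∘ Fin.succ) (v ∘ Fin.succ) = Zss at *
  generalize sixVertexZ x y κ (u ∘ Fin.castSucc) (v ∘ Fin.castSucc) = Zcc at *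
  generalize sixVertexZ x y κ (u ∘ Fin.succ) (v ∘ Fin.castSucc) = Zsc at *
  generalize sixVertexZ x y κ (u ∘ Fin.castSucc) (v ∘ Fin.succ) = Zcs at *
  generalize frozenZ x y (u ∘ Fin.castSucc) (v ∘ Fin.castSucc) (0, 0) = A at *
  generalize frozenZ x y (u ∘ Fin.castSucc) (v ∘ Fin.succ) (0, Fin.last _) = B at *
  refine mul_left_cancel₀
    (mul_ne_zero (mul_ne_zero hfirst hlast) (mul_ne_zero hfl hlf)) ?_
  linear_combination condensation + b * c * Zss * Zcc * w00 - a * d * Zsc * Zcs * w01 +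
    κ * ((u 0 - u (Fin.last _)) * (v 0 - v (Fin.last _))) *
      (b * c * (Zss * hcc + a * A * hss) + a * (x * d) * (Zsc * hcs + b * B * hsc))

end CornerDependence

section EdgeParameters

variable {R : Type*} [CommRing R] {n : ℕ}

/-- The parameters that single out the first and the last index: `z` at the first index, `z'` at
the last one, their product if these coincide, and `1` elsewhere. -/
def edgeVec (z z' : R) (i : Fin n) : R :=
  (if (i : ℕ) = 0 then z else 1) * if (i : ℕ) + 1 = n then z' else 1

theorem edgeVec_zero (z z' : R) : (edgeVec z z' : Fin (n + 2) → R) 0 = z := by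
  simp [edgeVec]

theorem edgeVec_last (z z' : R) : (edgeVec z z' : Fin (n + 2) → R) (Fin.last _) = z' := by
  simp [edgeVec]

theorem edgeVec_comp_castSucc (z z' : R) :
    (edgeVec z z' : Fin (n + 1) → R) ∘ Fin.castSucc = edgeVec z 1 := by
  funext i
  simp [edgeVec, i.isLt.ne]

theorem edgeVec_comp_succ (z z' : R) :
    (edgeVec z z' : Fin (n + 1) → R) ∘ Fin.succ = edgeVec 1 z' := by
  funext i
  simp [edgeVec]

theorem edgeVec_one_one : (edgeVec 1 1 : Fin n → R) = 1 := by
  funext i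
  simp [edgeVec]

theorem edgeVec_comp_mid (z z' : R) : (edgeVec z z' : Fin (n + 2) → R) ∘ mid = 1 := by
  rw [← edgeVec_one_one, ← edgeVec_comp_succ z 1, ← edgeVec_comp_castSucc z z']
  rfl

end EdgeParameters

section BoundaryStatistics

theorem exists_eq_ite_of_nonneg_of_sum_eq_one {n : ℕ} {a : Fin n → ℤ} (h0 : ∀ j, 0 ≤ a j)
    (h1 : ∑ j, a j = 1) : ∃ l, a = fun j => if j = l then 1 else 0 := by
  obtain ⟨l, hl⟩ : ∃ l, a l ≠ 0 := by
    by_contra! h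
    simp [h] at h1
  refine ⟨l, funext fun j => ?_⟩
  split_ifs with h
  · have := single_le_sum (fun i _ => h0 i) (mem_univ l)
    have := h0 l
    rw [h]
    omega
  · have := add_le_sum (fun i _ => h0 i) (mem_univ j) (mem_univ l) h
    have := h0 j
    have := h0 l
    omega

theorem sum_filter_lt_eq_zero_iff {n : ℕ} {a : Fin n → ℤ} (h0 : ∀ j, 0 ≤ a j)
    (h1 : ∑ j, a j = 1) {j : Fin n} (hj : a j = 0) :
    ∑ j' with j' < j, a j' = 0 ↔ ∃ j', j < j' ∧ a j' = 1 := by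
  obtain ⟨l, rfl⟩ := exists_eq_ite_of_nonneg_of_sum_eq_one h0 h1
  have hjl : j ≠ l := by simpa using hj
  simp [hjl.le_iff_lt]

theorem sum_filter_lt_eq_one_iff {n : ℕ} {a : Fin n → ℤ} (h0 : ∀ j, 0 ≤ a j)
    (h1 : ∑ j, a j = 1) (j : Fin n) :
    ∑ j' with j' < j, a j' = 1 ↔ ∃ j', j' < j ∧ a j' = 1 := by
  obtain ⟨l, rfl⟩ := exists_eq_ite_of_nonneg_of_sum_eq_one h0 h1
  simp

namespace IsASM

variable {n : ℕ}

theorem nuASM_eq {A : Fin n → Fin n → ℤ} (hA : IsASM A) :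
    nuASM A = #{p : Fin n × Fin n | A p.1 p.2 = 0 ∧ ∑ j' with j' < p.2, A p.1 j' = 1 ∧
      ∑ i' with i' < p.1, A i' p.2 = 1} := by
  have inversions : (∑ i : Fin n, ∑ i' : Fin n, ∑ j : Fin n, ∑ j' : Fin n,
      if i < i' ∧ j' ≤ j then A i j * A i' j' else 0) = ∑ i' : Fin n, ∑ j : Fin n,
      (∑ i with i < i', A i j) * (∑ j' with j' < j, A i' j' + A i' j) := by
    rw [sum_comm]
    refine sum_congr rfl fun i' _ => ?_
    rw [sum_comm]
    refine sum_congr rfl fun j _ => ?_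
    rw [← sum_filter_le_eq, sum_filter, sum_filter, sum_mul_sum]
    refine sum_congr rfl fun i _ => sum_congr rfl fun j' _ => ?_
    split_ifs <;> simp_all
  rw [nuASM, inversions, ← Int.toNat_natCast (#_), card_filter, Nat.cast_sum,
    Fintype.sum_prod_type]
  refine congrArg Int.toNat (sum_congr rfl fun i _ => sum_congr rfl fun j _ => ?_)
  have hrow := hA.row_sum_lt_add i j
  have hcol := hA.transpose.row_sum_lt_add j i
  have hij := hA.1 i j
  rcases hA.row_sum_lt i j with h | h <;> rcases hA.transpose.row_sum_lt j i with k | k <;>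
    rw [h] at hrow ⊢ <;> rw [k] at hcol ⊢ <;> rcases hij with a | a | a <;>
    simp [a] at hrow hcol ⊢

variable {A : Fin (n + 1) → Fin (n + 1) → ℤ}

theorem firstRow_nonneg (hA : IsASM A) (j : Fin (n + 1)) : 0 ≤ A 0 j := by
  have h := hA.transpose.row_sum_lt_add j 0
  rw [sum_filter_lt_zero] at h
  omega

theorem lastRow_nonneg (hA : IsASM A) (j : Fin (n + 1)) : 0 ≤ A (Fin.last n) j := by
  have h := hA.transpose.row_sum_lt j (Fin.last n)
  have h' := sum_filter_lt_last_add fun i => A i j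
  rw [hA.col_sum] at h'
  omega

theorem rhoT_eq (hA : IsASM A) : rhoT A = #{j | A 0 j = 0 ∧
    ∑ j' with j' < j, A 0 j' = ∑ i' with i' < 0, A i' j} := by
  refine congrArg card (filter_congr fun j _ => and_congr_right fun h => ?_)
  rw [sum_filter_lt_zero, sum_filter_lt_eq_zero_iff hA.firstRow_nonneg (hA.row_sum 0) h]
  rfl

theorem rhoB_eq (hA : IsASM A) : rhoB A = #{j | A (Fin.last n) j = 0 ∧
    ∑ j' with j' < j, A (Fin.last n) j' = ∑ i' with i' < Fin.last n, A i' j} := by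
  refine congrArg card (filter_congr fun j _ => and_congr_right fun h => ?_)
  have h' := sum_filter_lt_last_add fun i => A i j
  rw [hA.col_sum, show A (Fin.last n) j = 0 from h, add_zero] at h'
  rw [h', sum_filter_lt_eq_one_iff hA.lastRow_nonneg (hA.row_sum _)]
  rfl

theorem rhoL_eq (hA : IsASM A) : rhoL A = #{i | A i 0 = 0 ∧
    ∑ j' with j' < 0, A i j' = ∑ i' with i' < i, A i' 0} := by
  simp only [@eq_comm _ (∑ j' with j' < (0 : Fin (n + 1)), _)]
  exact hA.transpose.rhoT_eq

theorem rhoR_eq (hA : IsASM A) : rhoR A = #{i | A i (Fin.last n) = 0 ∧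
    ∑ j' with j' < Fin.last n, A i j' = ∑ i' with i' < i, A i' (Fin.last n)} := by
  simp only [@eq_comm _ (∑ j' with j' < Fin.last n, _)]
  exact hA.transpose.rhoB_eq

end IsASM

end BoundaryStatistics

section Refinement

variable {R : Type*} [CommRing R] {n : ℕ} {x y z1 z2 z3 z4 : R}

theorem edgeVec_succ_apply (z z' : R) (i : Fin (n + 1)) :
    edgeVec z z' i = (if i = 0 then z else 1) * if i = Fin.last n then z' else 1 := by
  simp only [edgeVec, Fin.ext_iff, Fin.val_zero, Fin.val_last, Nat.add_right_cancel_iff]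

theorem IsASM.edgeVec_eq_one_of_eq_neg_one {A : Fin (n + 1) → Fin (n + 1) → ℤ} (hA : IsASM A)
    {i j : Fin (n + 1)} (hij : A i j = -1) (z z' : R) : edgeVec z z' i = 1 := by
  have h0 : i ≠ 0 := by
    rintro rfl
    have := hA.firstRow_nonneg j
    omega
  have hlast : i ≠ Fin.last n := by
    rintro rfl
    have := hA.lastRow_nonneg j
    omega
  simp [edgeVec_succ_apply, h0, hlast]

theorem IsASM.ev_sixVertex_edgeVec {A : Fin (n + 1) → Fin (n + 1) → ℤ} (hA : IsASM A)
    (i j : Fin (n + 1)) :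
    (sixVertex x y 0 (edgeVec z1 z3 i) (edgeVec z4 z2 j)).ev (∑ j' with j' < j, A i j')
        (∑ i' with i' < i, A i' j) (A i j) =
      (if A i j = 0 ∧ ∑ j' with j' < j, A i j' = 1 ∧ ∑ i' with i' < i, A i' j = 1
        then x else 1) * (if A i j = -1 then y else 1) *
      if A i j = 0 ∧ ∑ j' with j' < j, A i j' = ∑ i' with i' < i, A i' j
        then edgeVec z1 z3 i * edgeVec z4 z2 j else 1 := by
  have hu (h : A i j = -1) := hA.edgeVec_eq_one_of_eq_neg_one h z1 z3
  have hv (h : A i j = -1) := hA.transpose.edgeVec_eq_one_of_eq_neg_one h z4 z2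
  have hrow := hA.row_sum_lt_add i j
  have hcol := hA.transpose.row_sum_lt_add j i
  have hij := hA.1 i j
  rcases hA.row_sum_lt i j with h | h <;> rcases hA.transpose.row_sum_lt j i with k | k <;>
    rw [h] at hrow ⊢ <;> rw [k] at hcol ⊢ <;> rcases hij with a | a | a <;>
    simp [a, VertexWeights.ev, sixVertex] at hrow hcol hu hv ⊢
  simp [hu, hv]

theorem prod_ite_eq_pow {ι : Type*} [Fintype ι] (p : ι → Prop) [DecidablePred p] (z : R) :
    ∏ j, (if p j then z else 1) = z ^ #{j | p j} := by
  simp [prod_ite]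

theorem prod_edgeVec_pow (z z' : R) (c : Fin (n + 1) → ℕ) :
    ∏ i, edgeVec z z' i ^ c i = z ^ c 0 * z' ^ c (Fin.last n) := by
  simp only [edgeVec_succ_apply, mul_pow, ite_pow, one_pow, prod_mul_distrib, Fintype.prod_ite_eq']

theorem prod_prod_ite_edgeVec (p : Fin (n + 1) → Fin (n + 1) → Prop) [∀ i j, Decidable (p i j)]
    (z1 z2 z3 z4 : R) :
    ∏ i, ∏ j, (if p i j then edgeVec z1 z3 i * edgeVec z4 z2 j else 1) =
      z1 ^ #{j | p 0 j} * z3 ^ #{j | p (Fin.last n) j} *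
        (z4 ^ #{i | p i 0} * z2 ^ #{i | p i (Fin.last n)}) := by
  have split (i j) : (if p i j then edgeVec z1 z3 i * edgeVec z4 z2 j else 1) =
      (if p i j then edgeVec z1 z3 i else 1) * if p i j then edgeVec z4 z2 j else 1 := by
    split_ifs <;> simp
  simp only [split, prod_mul_distrib]
  rw [prod_comm (f := fun i j => if p i j then edgeVec z4 z2 j else 1)]
  simp only [prod_ite_eq_pow, prod_edgeVec_pow]

theorem Zqua_succ_eq_sixVertexZ (n : ℕ) (x y z1 z2 z3 z4 : R) :
    Zqua (n + 1) x y z1 z2 z3 z4 =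
      sixVertexZ x y 0 (edgeVec z1 z3 : Fin (n + 1) → R) (edgeVec z4 z2) := by
  classical
  rw [sixVertexZ, asmZ, Zqua]
  refine sum_congr rfl fun e _ => if_ctx_congr Iff.rfl (fun hA => ?_) fun _ => rfl
  simp only [hA.ev_sixVertex_edgeVec, prod_mul_distrib, prod_prod_ite_edgeVec, hA.rhoT_eq,
    hA.rhoB_eq, hA.rhoL_eq, hA.rhoR_eq, hA.nuASM_eq, muASM]
  simp only [← prod_ite_eq_pow, Fintype.prod_prod_type]
  ring

end Refinement

section Symmetries

namespace IsASM

theorem rotate {n : ℕ} {A : Fin n → Fin n → ℤ} (hA : IsASM A) :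
    IsASM fun i j => A i.rev j.rev :=
  hA.reflect.transpose.reflect.transpose

end IsASM

variable {n : ℕ} (A : Fin n → Fin n → ℤ)

theorem nuASM_rotate : nuASM (fun i j => A i.rev j.rev) = nuASM A := by
  refine congrArg Int.toNat ?_
  rw [← Equiv.sum_comp Fin.revPerm, sum_comm, ← Equiv.sum_comp Fin.revPerm]
  refine sum_congr rfl fun i _ => sum_congr rfl fun i' _ => ?_
  rw [← Equiv.sum_comp Fin.revPerm, sum_comm, ← Equiv.sum_comp Fin.revPerm]
  refine sum_congr rfl fun j _ => sum_congr rfl fun j' _ => ?_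
  simp [mul_comm]

theorem muASM_rotate : muASM (fun i j => A i.rev j.rev) = muASM A :=
  card_equiv (Equiv.prodCongr Fin.revPerm Fin.revPerm) fun p => by simp

theorem rhoT_rotate : rhoT (fun i j => A i.rev j.rev) = rhoB A := by
  refine card_equiv Fin.revPerm fun j => ?_
  have h : (⟨0, j.pos⟩ : Fin n).rev = ⟨n - 1, Nat.sub_lt j.pos Nat.one_pos⟩ := Fin.ext (by simp)
  simp only [mem_filter, mem_univ, true_and, h]
  rw [← Fin.revPerm.exists_congr_right]
  simp [Fin.lt_rev_iff]

theorem rhoB_rotate : rhoB (fun i j => A i.rev j.rev) = rhoT A := by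
  simpa using (rhoT_rotate fun i j => A i.rev j.rev).symm

theorem rhoL_rotate : rhoL (fun i j => A i.rev j.rev) = rhoR A :=
  rhoT_rotate fun i j => A j i

theorem rhoR_rotate : rhoR (fun i j => A i.rev j.rev) = rhoL A :=
  rhoB_rotate fun i j => A j i

variable {R S : Type*} [CommRing R] [CommRing S]

theorem Zqua_rotate (n : ℕ) (x y z1 z2 z3 z4 : R) :
    Zqua n x y z3 z4 z1 z2 = Zqua n x y z1 z2 z3 z4 := by
  classical
  rw [Zqua, Zqua, ← (Fin.revPerm.arrowCongr
    (Fin.revPerm.arrowCongr (Equiv.refl (Fin 3)))).sum_comp]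
  refine sum_congr rfl fun e _ => ?_
  have he : asmMat (Fin.revPerm.arrowCongr (Fin.revPerm.arrowCongr (Equiv.refl (Fin 3))) e) =
    fun i j : Fin n => asmMat e i.rev j.rev := rfl
  rw [he, nuASM_rotate, muASM_rotate, rhoT_rotate, rhoB_rotate, rhoL_rotate, rhoR_rotate]
  refine if_congr ⟨fun h => by simpa using h.rotate, IsASM.rotate⟩ ?_ rfl
  ring

theorem sixVertexZ_swap (x y κ : R) (u v : Fin n → R) :
    sixVertexZ x y κ v u = sixVertexZ x y κ u v := by
  rw [sixVertexZ, ← asmZ_swap, sixVertexZ]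
  congr! 3 with i j
  simp only [VertexWeights.swap, sixVertex, VertexWeights.mk.injEq]
  refine ⟨?_, ?_, ?_, ?_, trivial, ?_⟩ <;> ring

theorem Zqua_succ_transpose (n : ℕ) (x y z1 z2 z3 z4 : R) :
    Zqua (n + 1) x y z4 z3 z2 z1 = Zqua (n + 1) x y z1 z2 z3 z4 := by
  rw [Zqua_succ_eq_sixVertexZ, Zqua_succ_eq_sixVertexZ, sixVertexZ_swap]

theorem map_Zqua (f : R →+* S) (n : ℕ) (x y z1 z2 z3 z4 : R) :
    f (Zqua n x y z1 z2 z3 z4) = Zqua n (f x) (f y) (f z1) (f z2) (f z3) (f z4) := by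
  simp only [Zqua, map_sum, apply_ite f, map_mul, map_pow, map_zero]

end Symmetries

section EdgeRefinement

variable {R : Type*} [CommRing R] (n : ℕ) (x y κ z1 z2 z3 z4 : R)

theorem sixVertexZ_zero_one_one : sixVertexZ x y 0 (1 : Fin (n + 1) → R) 1 = Zun (n + 1) x y := by
  rw [Zun, Zqua_succ_eq_sixVertexZ, edgeVec_one_one]

theorem sixVertexZ_edgeVec_topLeft :
    sixVertexZ x y κ (edgeVec z1 1 : Fin (n + 2) → R) (edgeVec z4 1) =
      (z1 * z4 - κ * (z1 - 1) * (z4 - 1)) *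
        frozenZ x y (edgeVec z1 1 : Fin (n + 2) → R) (edgeVec z4 1) (0, 0) + Zun (n + 1) x y := by
  have h (z : R) : (edgeVec z 1 : Fin (n + 2) → R) ∘ Fin.succ = 1 := by
    rw [edgeVec_comp_succ, edgeVec_one_one]
  rw [sixVertexZ_topLeft (h _) (h _), sixVertexZ_zero_one_one, edgeVec_zero, edgeVec_zero]
  rfl

theorem sixVertexZ_edgeVec_bottomRight :
    sixVertexZ x y κ (edgeVec 1 z3 : Fin (n + 2) → R) (edgeVec 1 z2) =
      x * (z3 * z2 - κ * (z3 - 1) * (z2 - 1)) *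
        frozenZ x y (edgeVec 1 z3 : Fin (n + 2) → R) (edgeVec 1 z2) (Fin.last _, Fin.last _) +
        Zun (n + 1) x y := by
  have h (z : R) : (edgeVec 1 z : Fin (n + 2) → R) ∘ Fin.castSucc = 1 := by
    rw [edgeVec_comp_castSucc, edgeVec_one_one]
  rw [sixVertexZ_bottomRight (h _) (h _), sixVertexZ_zero_one_one, edgeVec_last, edgeVec_last]
  rfl

theorem sixVertexZ_edgeVec_topRight :
    sixVertexZ x y κ (edgeVec z1 1 : Fin (n + 2) → R) (edgeVec 1 z2) =
      (1 - x * κ * (z1 - 1) * (z2 - 1)) *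
        frozenZ x y (edgeVec z1 1 : Fin (n + 2) → R) (edgeVec 1 z2) (0, Fin.last _) +
        (x * (z1 * z2)) ^ (n + 1) * Zun (n + 1) x y := by
  have hu : (edgeVec z1 1 : Fin (n + 2) → R) ∘ Fin.succ = 1 := by
    rw [edgeVec_comp_succ, edgeVec_one_one]
  have hv : (edgeVec 1 z2 : Fin (n + 2) → R) ∘ Fin.castSucc = 1 := by
    rw [edgeVec_comp_castSucc, edgeVec_one_one]
  rw [sixVertexZ_topRight hu hv, sixVertexZ_zero_one_one, edgeVec_zero, edgeVec_last]
  rfl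

theorem sixVertexZ_edgeVec_bottomLeft :
    sixVertexZ x y κ (edgeVec 1 z3 : Fin (n + 2) → R) (edgeVec z4 1) =
      (1 - x * κ * (z3 - 1) * (z4 - 1)) *
        frozenZ x y (edgeVec 1 z3 : Fin (n + 2) → R) (edgeVec z4 1) (Fin.last _, 0) +
        (x * (z3 * z4)) ^ (n + 1) * Zun (n + 1) x y := by
  have hu : (edgeVec 1 z3 : Fin (n + 2) → R) ∘ Fin.castSucc = 1 := by
    rw [edgeVec_comp_castSucc, edgeVec_one_one]
  have hv : (edgeVec z4 1 : Fin (n + 2) → R) ∘ Fin.succ = 1 := by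
    rw [edgeVec_comp_succ, edgeVec_one_one]
  rw [sixVertexZ_bottomLeft hu hv, sixVertexZ_zero_one_one, edgeVec_zero, edgeVec_last]
  rfl

theorem Zqua_corners : Zqua (n + 3) x y z1 z2 z3 z4 =
    z1 * z4 * (x * (z3 * z2) *
        frozenCornersZ x y (edgeVec z1 z3 : Fin (n + 3) → R) (edgeVec z4 z2) +
      frozenZ x y (edgeVec z1 1 : Fin (n + 2) → R) (edgeVec z4 1) (0, 0)) +
    Zqua (n + 2) x y 1 z2 z3 1 +
    z1 * z4 * (x * (z3 * z2)) * ((x * (z1 * z2)) ^ (n + 1) * Zqua (n + 2) x y 1 1 z3 z4 +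
      (x * (z3 * z4)) ^ (n + 1) *
        frozenZ x y (edgeVec z1 1 : Fin (n + 2) → R) (edgeVec 1 z2) (0, Fin.last _)) := by
  rw [Zqua_succ_eq_sixVertexZ, sixVertexZ_corners (edgeVec_comp_mid _ _) (edgeVec_comp_mid _ _)]
  simp only [sixVertex, edgeVec_zero, edgeVec_last, edgeVec_comp_castSucc, edgeVec_comp_succ,
    Zqua_succ_eq_sixVertexZ, zero_mul, mul_zero, sub_zero, one_mul]

end EdgeRefinement

section QuadraticRelation

theorem frozenCornersZ_edgeVec {K : Type*} [Field K] (n : ℕ) {x y z1 z2 z3 z4 : K}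
    (hy : y ≠ 0) (h14 : y * (z1 * z4) - (z1 - 1) * (z4 - 1) ≠ 0)
    (h32 : y * (z3 * z2) - (z3 - 1) * (z2 - 1) ≠ 0) (h12 : y - x * (z1 - 1) * (z2 - 1) ≠ 0)
    (h34 : y - x * (z3 - 1) * (z4 - 1) ≠ 0) :
    x * y * ((z1 - z3) * (z4 - z2)) *
      (frozenCornersZ x y (edgeVec z1 z3 : Fin (n + 3) → K) (edgeVec z4 z2) * Zun (n + 1) x y -
        frozenZ x y (edgeVec z1 1 : Fin (n + 2) → K) (edgeVec z4 1) (0, 0) *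
          frozenZ x y (edgeVec 1 z3 : Fin (n + 2) → K) (edgeVec 1 z2) (Fin.last _, Fin.last _) -
        frozenZ x y (edgeVec z1 1 : Fin (n + 2) → K) (edgeVec 1 z2) (0, Fin.last _) *
          frozenZ x y (edgeVec 1 z3 : Fin (n + 2) → K) (edgeVec z4 1) (Fin.last _, 0)) =
      (x * (y * (z3 * z2) - (z3 - 1) * (z2 - 1)) *
          frozenZ x y (edgeVec 1 z3 : Fin (n + 2) → K) (edgeVec 1 z2) (Fin.last _, Fin.last _) +
        y * Zun (n + 1) x y) *
      ((y * (z1 * z4) - (z1 - 1) * (z4 - 1)) *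
          frozenZ x y (edgeVec z1 1 : Fin (n + 2) → K) (edgeVec z4 1) (0, 0) +
        y * Zun (n + 1) x y) -
      ((y - x * (z3 - 1) * (z4 - 1)) *
          frozenZ x y (edgeVec 1 z3 : Fin (n + 2) → K) (edgeVec z4 1) (Fin.last _, 0) +
        y * ((x * (z3 * z4)) ^ (n + 1) * Zun (n + 1) x y)) *
      ((y - x * (z1 - 1) * (z2 - 1)) *
          frozenZ x y (edgeVec z1 1 : Fin (n + 2) → K) (edgeVec 1 z2) (0, Fin.last _) +
        y * ((x * (z1 * z2)) ^ (n + 1) * Zun (n + 1) x y)) := by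
  have w00 (a b : K) : y * (a * b - y⁻¹ * (a - 1) * (b - 1)) = y * (a * b) - (a - 1) * (b - 1) := by
    field_simp
  have w01 (a b : K) : y * (1 - x * y⁻¹ * (a - 1) * (b - 1)) = y - x * (a - 1) * (b - 1) := by
    field_simp
  have condensation := frozenCornersZ_condensation (x := x) (n := n + 1) (inv_mul_cancel₀ hy)
    (edgeVec_comp_mid z1 z3) (edgeVec_comp_mid z4 z2)
  simp only [edgeVec_zero, edgeVec_last, edgeVec_comp_castSucc, edgeVec_comp_succ,
    sixVertexZ_zero_one_one, sixVertexZ_edgeVec_topLeft, sixVertexZ_edgeVec_bottomRight,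
    sixVertexZ_edgeVec_topRight, sixVertexZ_edgeVec_bottomLeft, sixVertex] at condensation
  rw [← w00] at h14 h32
  rw [← w01] at h12 h34
  replace condensation := condensation (right_ne_zero_of_mul h14) (right_ne_zero_of_mul h32)
    (right_ne_zero_of_mul h12) (right_ne_zero_of_mul h34)
  simp only [← w00, ← w01]
  generalize frozenCornersZ x y (edgeVec z1 z3 : Fin (n + 3) → K) (edgeVec z4 z2) = N at *
  generalize frozenZ x y (edgeVec z1 1 : Fin (n + 2) → K) (edgeVec z4 1) (0, 0) = A at *
  generalize frozenZ x y (edgeVec z1 1 : Fin (n + 2) → K) (edgeVec 1 z2) _ = B at *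
  generalize frozenZ x y (edgeVec 1 z3 : Fin (n + 2) → K) (edgeVec z4 1) _ = C at *
  generalize frozenZ x y (edgeVec 1 z3 : Fin (n + 2) → K) (edgeVec 1 z2) _ = D at *
  linear_combination y ^ 2 * condensation - x * y * ((z1 - z3) * (z4 - z2)) *
    (N * Zun (n + 1) x y - A * D - B * C) * mul_inv_cancel₀ hy

/-- The difference of the two sides of the quadratic relation at size `n + 3`. -/
noncomputable def quadraticDefect {R : Type*} [CommRing R] (n : ℕ) (x y z1 z2 z3 z4 : R) : R :=
  y * (z4 - z2) * (z1 - z3) * Zqua (n + 3) x y z1 z2 z3 z4 * Zun (n + 1) x y -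
    (((z1 - 1) * (z2 - 1) - y * z1 * z2) * ((z3 - 1) * (z4 - 1) - y * z3 * z4) *
        Zadj (n + 2) x y z4 z1 * Zadj (n + 2) x y z2 z3
    - (x * (z4 - 1) * (z1 - 1) - y) * (x * (z2 - 1) * (z3 - 1) - y) *
        z1 * z2 * z3 * z4 * Zbaradj (n + 2) x y z1 z2 * Zbaradj (n + 2) x y z3 z4
    - (z2 - 1) * (z3 - 1) * ((z4 - 1) * (z1 - 1) - y * z4 * z1) *
        Zadj (n + 2) x y z4 z1 * Zun (n + 1) x y
    + (z3 - 1) * (z4 - 1) * (x * (z1 - 1) * (z2 - 1) - y) * z1 * z2 *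
        (x * z3 * z4) ^ (n + 2) * Zbaradj (n + 2) x y z1 z2 * Zun (n + 1) x y
    - (z4 - 1) * (z1 - 1) * ((z2 - 1) * (z3 - 1) - y * z2 * z3) *
        Zadj (n + 2) x y z2 z3 * Zun (n + 1) x y
    + (z1 - 1) * (z2 - 1) * (x * (z3 - 1) * (z4 - 1) - y) * z3 * z4 *
        (x * z1 * z2) ^ (n + 2) * Zbaradj (n + 2) x y z3 z4 * Zun (n + 1) x y
    + (z1 - 1) * (z2 - 1) * (z3 - 1) * (z4 - 1) *
        (1 - (x ^ 2 * z1 * z2 * z3 * z4) ^ (n + 2)) * (Zun (n + 1) x y) ^ 2)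

theorem map_quadraticDefect {R S : Type*} [CommRing R] [CommRing S] (f : R →+* S) (n : ℕ)
    (x y z1 z2 z3 z4 : R) : f (quadraticDefect n x y z1 z2 z3 z4) =
      quadraticDefect n (f x) (f y) (f z1) (f z2) (f z3) (f z4) := by
  simp only [quadraticDefect, Zadj, Zbaradj, Zun, map_sub, map_add, map_mul, map_pow, map_one,
    map_Zqua]

theorem quadraticDefect_eq_zero_of_ne {K : Type*} [Field K] (n : ℕ) {x y z1 z2 z3 z4 : K}
    (hy : y ≠ 0) (h14 : y * (z1 * z4) - (z1 - 1) * (z4 - 1) ≠ 0)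
    (h32 : y * (z3 * z2) - (z3 - 1) * (z2 - 1) ≠ 0) (h12 : y - x * (z1 - 1) * (z2 - 1) ≠ 0)
    (h34 : y - x * (z3 - 1) * (z4 - 1) ≠ 0) : quadraticDefect n x y z1 z2 z3 z4 = 0 := by
  have condensation := frozenCornersZ_edgeVec n hy h14 h32 h12 h34
  rw [quadraticDefect, Zadj, Zadj, Zbaradj, Zbaradj, Zqua_succ_transpose _ x y z1,
    Zqua_rotate _ x y 1 1 z3, ← Zqua_rotate _ x y z2, Zqua_succ_transpose _ x y 1 z2, Zqua_corners]
  simp only [Zqua_succ_eq_sixVertexZ, sixVertexZ_edgeVec_topLeft, sixVertexZ_edgeVec_bottomRight,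
    sixVertexZ_edgeVec_topRight, sixVertexZ_edgeVec_bottomLeft]
  linear_combination z1 * z2 * z3 * z4 * condensation

theorem quadraticDefect_eq_zero_of_injective {A S K : Type*} [CommRing A] [CommRing S]
    [Nontrivial S] [Field K] {φ : A →+* K} (hφ : Function.Injective φ) (ε : A →+* S) (n : ℕ)
    (x : A) {y z1 z2 z3 z4 : A} (hy : ε y = 1) (h1 : ε z1 = 1) (h2 : ε z2 = 1) (h3 : ε z3 = 1)
    (h4 : ε z4 = 1) : quadraticDefect n x y z1 z2 z3 z4 = 0 := by
  have hne {a : A} : ε a = 1 → φ a ≠ 0 := map_ne_zero_of_map_eq_one hφ ε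
  refine hφ ?_
  rw [map_quadraticDefect, map_zero]
  refine quadraticDefect_eq_zero_of_ne n (hne hy) ?_ ?_ ?_ ?_
  · simpa only [map_sub, map_mul, map_one] using
      hne (a := y * (z1 * z4) - (z1 - 1) * (z4 - 1)) (by simp [hy, h1, h4])
  · simpa only [map_sub, map_mul, map_one] using
      hne (a := y * (z3 * z2) - (z3 - 1) * (z2 - 1)) (by simp [hy, h2, h3])
  · simpa only [map_sub, map_mul, map_one] using
      hne (a := y - x * (z1 - 1) * (z2 - 1)) (by simp [hy, h1, h2])
  · simpa only [map_sub, map_mul, map_one] using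
      hne (a := y - x * (z3 - 1) * (z4 - 1)) (by simp [hy, h3, h4])

theorem quadraticDefect_eq_zero {R : Type*} [CommRing R] (n : ℕ) (x y z1 z2 z3 z4 : R) :
    quadraticDefect n x y z1 z2 z3 z4 = 0 := by
  let X : Fin 6 → MvPolynomial (Fin 6) ℤ := MvPolynomial.X
  have hX (i : Fin 6) : MvPolynomial.eval 1 (X i) = 1 := MvPolynomial.eval_X i
  have hgeneric : quadraticDefect n (X 0) (X 1) (X 2) (X 3) (X 4) (X 5) = 0 :=
    quadraticDefect_eq_zero_of_injective
      (FaithfulSMul.algebraMap_injective _ (FractionRing (MvPolynomial (Fin 6) ℤ)))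
      (MvPolynomial.eval 1) n (X 0) (hX 1) (hX 2) (hX 3) (hX 4) (hX 5)
  have h := congrArg (MvPolynomial.eval₂Hom (Int.castRingHom R) ![x, y, z1, z2, z3, z4]) hgeneric
  simpa [X, map_quadraticDefect] using h

end QuadraticRelation

/-- Theorem (quadratic relation for the quadruply-refined ASM generating
function), stated for all values of the variables in any commutative ring,
equivalently as an identity of polynomials in `ℤ[x,y,z1,z2,z3,z4]`. -/
theorem stmt0 {R : Type*} [CommRing R] (x y z1 z2 z3 z4 : R) (n : ℕ) (hn : 3 ≤ n) :
    y * (z4 - z2) * (z1 - z3) * Zqua n x y z1 z2 z3 z4 * Zun (n - 2) x y =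
      ((z1 - 1) * (z2 - 1) - y * z1 * z2) * ((z3 - 1) * (z4 - 1) - y * z3 * z4) *
          Zadj (n - 1) x y z4 z1 * Zadj (n - 1) x y z2 z3
      - (x * (z4 - 1) * (z1 - 1) - y) * (x * (z2 - 1) * (z3 - 1) - y) *
          z1 * z2 * z3 * z4 * Zbaradj (n - 1) x y z1 z2 * Zbaradj (n - 1) x y z3 z4
      - (z2 - 1) * (z3 - 1) * ((z4 - 1) * (z1 - 1) - y * z4 * z1) *
          Zadj (n - 1) x y z4 z1 * Zun (n - 2) x y
      + (z3 - 1) * (z4 - 1) * (x * (z1 - 1) * (z2 - 1) - y) * z1 * z2 *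
          (x * z3 * z4) ^ (n - 1) * Zbaradj (n - 1) x y z1 z2 * Zun (n - 2) x y
      - (z4 - 1) * (z1 - 1) * ((z2 - 1) * (z3 - 1) - y * z2 * z3) *
          Zadj (n - 1) x y z2 z3 * Zun (n - 2) x y
      + (z1 - 1) * (z2 - 1) * (x * (z3 - 1) * (z4 - 1) - y) * z3 * z4 *
          (x * z1 * z2) ^ (n - 1) * Zbaradj (n - 1) x y z3 z4 * Zun (n - 2) x y
      + (z1 - 1) * (z2 - 1) * (z3 - 1) * (z4 - 1) *
          (1 - (x ^ 2 * z1 * z2 * z3 * z4) ^ (n - 1)) * (Zun (n - 2) x y) ^ 2 := by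
  obtain ⟨m, rfl⟩ := Nat.exists_eq_add_of_le' hn
  exact sub_eq_zero.mp (quadraticDefect_eq_zero m x y z1 z2 z3 z4)
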